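/- arXiv:2403.18744 — 8 statements merged into one kernel-verified Lean document; each statement's English description precedes it below -/
import Mathlib

section
/- Let E be a real Hilbert space, β > 0, and let f : E → ℝ ∪ {+∞} be proper, convex and lower semicontinuous. Then f is (finite-valued and) Fréchet differentiable on E with β-Lipschitz continuous gradient if and only if its Fenchel conjugate f* is (1/β)-strongly convex. In this case, f* is also coercive. -/
open scoped Classical
open scoped RealInnerProductSpace

noncomputable section

variable {E : Type*} [NormedAddCommGroup E] [InnerProductSpace ℝ E]

/-- A function with values in `ℝ ∪ {+∞}` (modelled inside `EReal`) is proper if it never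
takes the value `-∞` and is not identically `+∞`. -/
def EProper {V : Type*} (f : V → EReal) : Prop := (∀ x, f x ≠ ⊥) ∧ (∃ x, f x ≠ ⊤)

/-- Convexity for extended-real-valued functions. -/
def EConvexOn {V : Type*} [AddCommMonoid V] [Module ℝ V] (f : V → EReal) : Prop :=
  ∀ x y : V, ∀ a b : ℝ, 0 < a → 0 < b → a + b = 1 →
    f (a • x + b • y) ≤ (a : EReal) * f x + (b : EReal) * f y

/-- The Fenchel (Legendre) conjugate `f*(μ) = sup_x (⟨μ, x⟩ - f x)`. -/
def fenchel (f : E → EReal) (μ : E) : EReal := ⨆ x : E, (⟪μ, x⟫ : EReal) - f x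

/-- `μ` is a subgradient of `f` at `x`: `f y ≥ f x + ⟨μ, y - x⟩` for all `y`. -/
def ESubgradAt (f : E → EReal) (x μ : E) : Prop :=
  ∀ y : E, f x + (⟪μ, y - x⟫ : EReal) ≤ f y

/-- The support function `σ_C(μ) = sup_{x ∈ C} ⟨μ, x⟩` of a set `C`. -/
def supportFn (C : Set E) (μ : E) : EReal := ⨆ x : C, ((⟪μ, (x : E)⟫ : ℝ) : EReal)

/-- `Ξ` is `β`-strongly convex: `Ξ - (β/2)‖·‖²` is convex. -/
def StronglyConvexE (β : ℝ) (Ξ : E → EReal) : Prop :=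
  EConvexOn (fun x => Ξ x - ((β / 2 * ‖x‖ ^ 2 : ℝ) : EReal))

/-- The Bregman distance associated with `Ξ`:
`B_Ξ(μ, (μ', w)) = Ξ(μ) - Ξ(μ') - ⟨μ - μ', w⟩` if `w ∈ ∂Ξ(μ')`, and `+∞` otherwise. -/
def bregman (Ξ : E → EReal) (μ μ' w : E) : EReal :=
  if ESubgradAt Ξ μ' w then Ξ μ - Ξ μ' - ((⟪μ - μ', w⟫ : ℝ) : EReal) else ⊤

/-- Coercivity for extended-real-valued functions: `f x → +∞` as `‖x‖ → +∞`. -/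
def ECoercive {V : Type*} [NormedAddCommGroup V] (f : V → EReal) : Prop :=
  ∀ M : ℝ, ∃ R : ℝ, ∀ x : V, R ≤ ‖x‖ → (M : EReal) ≤ f x

/-! The conjugate of a quadratic of curvature `α > 0` is a quadratic of curvature `α⁻¹`, and
conjugation reverses inequalities. If `∇f` is `β`-Lipschitz, then `f` lies below a quadratic of
curvature `β` touching it at any given point, so `f*` is the supremum of the conjugate quadratics; a
supremum of quadratics of curvature `1/β` is `(1/β)`-strongly convex, and coercive because each of
them is.

Conversely, if `f*` is `(1/β)`-strongly convex, then every `x` is a subgradient of `f*` at some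
point `m x`, the minimiser of `f* - ⟪x, ·⟫`, and there `f*` lies above a touching quadratic of
curvature `1/β`. Conjugating, `f = f**` lies below a quadratic of curvature `β` touching it at `x`
with slope `m x`. Hence `∇f = m`, and strong monotonicity of `∂f*` makes `m` Lipschitz.
-/

open Filter Set Topology
open scoped NNReal

section Quadratic

/-- The quadratic of curvature `α` with value `c` and gradient `v` at `x`. Upper bounds of this
shape express smoothness, lower bounds strong convexity. -/
def tangentQuadratic (α c : ℝ) (x v y : E) : ℝ :=
  c + ⟪v, y - x⟫ + α / 2 * ‖y - x‖ ^ 2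

lemma inner_sub_tangentQuadratic {α : ℝ} (hα : α ≠ 0) (c : ℝ) (x v μ y : E) :
    ⟪μ, y⟫ - tangentQuadratic α c x v y =
      tangentQuadratic α⁻¹ (⟪x, v⟫ - c) v x μ - α / 2 * ‖y - x - α⁻¹ • (μ - v)‖ ^ 2 := by
  obtain ⟨d, rfl⟩ : ∃ d, y = x + d := ⟨y - x, by abel⟩
  obtain ⟨w, rfl⟩ : ∃ w, μ = v + w := ⟨μ - v, by abel⟩
  simp only [tangentQuadratic, add_sub_cancel_left, norm_sub_sq_real, norm_smul, mul_pow,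
    Real.norm_eq_abs, sq_abs, inner_add_left, inner_add_right, inner_smul_right,
    real_inner_comm v x, real_inner_comm w x, real_inner_comm w d]
  field_simp
  ring

lemma stronglyConvexE_tangentQuadratic (α c : ℝ) (x v : E) :
    StronglyConvexE α (fun y => (tangentQuadratic α c x v y : EReal)) := by
  have affine (y : E) : tangentQuadratic α c x v y - α / 2 * ‖y‖ ^ 2 =
      c - ⟪v, x⟫ + α / 2 * ‖x‖ ^ 2 + ⟪v - α • x, y⟫ := by
    simp only [tangentQuadratic, norm_sub_sq_real, inner_sub_left, inner_sub_right,
      real_inner_smul_left, real_inner_comm x y]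
    ring
  intro y z a b _ _ hab
  dsimp only
  norm_cast
  simp only [affine, inner_add_right, real_inner_smul_right]
  obtain rfl : b = 1 - a := by linarith
  linarith

lemma eCoercive_tangentQuadratic {α : ℝ} (hα : 0 < α) (c : ℝ) (x v : E) :
    ECoercive (fun y => (tangentQuadratic α c x v y : EReal)) := by
  intro M
  refine ⟨‖x‖ + (1 + 2 * (‖v‖ + |M - c|) / α), fun y hy => EReal.coe_le_coe_iff.2 ?_⟩
  have hr : 1 + 2 * (‖v‖ + |M - c|) / α ≤ ‖y - x‖ := by linarith [norm_sub_norm_le y x]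
  have one_le : 1 ≤ ‖y - x‖ := (le_add_of_nonneg_right (by positivity)).trans hr
  have slope : |M - c| ≤ α / 2 * ‖y - x‖ - ‖v‖ := by
    have : 2 * (‖v‖ + |M - c|) / α ≤ ‖y - x‖ := by linarith
    rw [div_le_iff₀ hα] at this
    linarith
  have cauchy_schwarz : -(‖v‖ * ‖y - x‖) ≤ ⟪v, y - x⟫ :=
    neg_le_of_abs_le (abs_real_inner_le_norm v (y - x))
  calc M ≤ c + |M - c| := by linarith [le_abs_self (M - c)]
    _ ≤ c + (α / 2 * ‖y - x‖ - ‖v‖) * ‖y - x‖ := by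
      gcongr
      exact slope.trans (le_mul_of_one_le_right ((abs_nonneg _).trans slope) one_le)
    _ ≤ tangentQuadratic α c x v y := by
      unfold tangentQuadratic
      linarith

end Quadratic

section Conjugate

variable {f g : E → EReal}

lemma inner_sub_le_fenchel (f : E → EReal) (μ x : E) : (⟪μ, x⟫ : EReal) - f x ≤ fenchel f μ :=
  le_iSup (fun x : E => (⟪μ, x⟫ : EReal) - f x) x

lemma fenchel_le_coe_iff {μ : E} {c : ℝ} :
    fenchel f μ ≤ c ↔ ∀ x, ((⟪μ, x⟫ - c : ℝ) : EReal) ≤ f x := by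
  refine iSup_le_iff.trans (forall_congr' fun x => ?_)
  have bot := EReal.coe_ne_bot c
  have top := EReal.coe_ne_top c
  rw [EReal.coe_sub, EReal.sub_le_iff_le_add (.inr top) (.inr bot),
    EReal.sub_le_iff_le_add (.inl bot) (.inl top), add_comm]

lemma fenchel_anti (h : ∀ x, f x ≤ g x) (μ : E) : fenchel g μ ≤ fenchel f μ :=
  iSup_mono fun x => EReal.sub_le_sub le_rfl (h x)

lemma fenchel_ne_bot {x : E} (hx : f x ≠ ⊤) (μ : E) : fenchel f μ ≠ ⊥ := by
  refine ne_bot_of_le_ne_bot ?_ (inner_sub_le_fenchel f μ x)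
  simpa [sub_eq_add_neg, EReal.add_eq_bot_iff] using hx

lemma lowerSemicontinuous_add_coe {X : Type*} [TopologicalSpace X] {f : X → EReal} {u : X → ℝ}
    (hf : LowerSemicontinuous f) (hu : Continuous u) : LowerSemicontinuous (fun x => f x + u x) :=
  hf.add' (continuous_coe_real_ereal.comp hu).lowerSemicontinuous fun _ =>
    EReal.continuousAt_add (Or.inr (EReal.coe_ne_bot _)) (Or.inr (EReal.coe_ne_top _))

lemma lowerSemicontinuous_fenchel (f : E → EReal) : LowerSemicontinuous (fenchel f) := by
  refine lowerSemicontinuous_iSup fun x => ?_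
  simp only [sub_eq_add_neg, add_comm _ (-f x)]
  exact lowerSemicontinuous_add_coe lowerSemicontinuous_const
    (continuous_id.inner continuous_const)

lemma fenchel_tangentQuadratic {α : ℝ} (hα : 0 < α) (c : ℝ) (x v μ : E) :
    fenchel (fun y => (tangentQuadratic α c x v y : EReal)) μ =
      (tangentQuadratic α⁻¹ (⟪x, v⟫ - c) v x μ : EReal) := by
  refine le_antisymm (iSup_le fun y => ?_) (le_iSup_of_le (x + α⁻¹ • (μ - v)) ?_)
  · rw [← EReal.coe_sub, EReal.coe_le_coe_iff, inner_sub_tangentQuadratic hα.ne']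
    exact sub_le_self _ (by positivity)
  · rw [← EReal.coe_sub, inner_sub_tangentQuadratic hα.ne']
    simp

lemma fenchel_eq_of_eSubgradAt {x μ : E} (h : ESubgradAt f x μ) {c : ℝ} (hc : f x = c) :
    fenchel f μ = (⟪μ, x⟫ - c : ℝ) := by
  refine le_antisymm (fenchel_le_coe_iff.2 fun y => ?_) ?_
  · refine le_of_eq_of_le ?_ (h y)
    rw [hc]
    norm_cast
    rw [inner_sub_right]
    ring
  · simpa [hc] using inner_sub_le_fenchel f μ x

end Conjugate

section FenchelMoreau

variable {V : Type*} [AddCommGroup V] [Module ℝ V]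

lemma EConvexOn.apply_le_coe {f : V → EReal} (hf : EConvexOn f) {x y : V} {a b s t : ℝ}
    (ha : 0 < a) (hb : 0 < b) (hab : a + b = 1) (hx : f x ≤ s) (hy : f y ≤ t) :
    f (a • x + b • y) ≤ (a * s + b * t : ℝ) := by
  refine (hf x y a b ha hb hab).trans ?_
  push_cast
  gcongr

lemma EConvexOn.convex_epigraph {f : V → EReal} (hf : EConvexOn f) :
    Convex ℝ {p : V × ℝ | f p.1 ≤ p.2} :=
  convex_iff_forall_pos.2 fun _ hx _ hy _ _ ha hb hab => hf.apply_le_coe ha hb hab hx hy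

lemma EConvexOn.add_coe {f : V → EReal} (hf : EConvexOn f) {u : V → ℝ}
    (hu : ConvexOn ℝ univ u) : EConvexOn (fun x => f x + u x) := by
  intro x y a b ha hb hab
  have distrib {r : ℝ} (hr : 0 < r) (z : V) :
      (r : EReal) * (f z + u z) = (r : EReal) * f z + ((r * u z : ℝ) : EReal) := by
    rw [EReal.left_distrib_of_nonneg_of_ne_top (EReal.coe_nonneg.2 hr.le) (EReal.coe_ne_top r),
      EReal.coe_mul]
  dsimp only
  rw [distrib ha, distrib hb, add_add_add_comm, ← EReal.coe_add]
  exact add_le_add (hf x y a b ha hb hab)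
    (EReal.coe_le_coe_iff.2 (hu.2 (mem_univ x) (mem_univ y) ha.le hb.le hab))

lemma isClosed_real_epigraph {X : Type*} [TopologicalSpace X] {f : X → EReal}
    (hf : LowerSemicontinuous f) : IsClosed {p : X × ℝ | f p.1 ≤ p.2} :=
  hf.isClosed_epigraph.preimage
    (continuous_fst.prodMk (continuous_coe_real_ereal.comp continuous_snd))

lemma EConvexOn.exists_separating_epigraph [TopologicalSpace V] [IsTopologicalAddGroup V]
    [ContinuousSMul ℝ V] [LocallyConvexSpace ℝ V] {f : V → EReal} (hf : EConvexOn f)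
    (hlsc : LowerSemicontinuous f) {x₀ : V} {t₀ : ℝ} (h₀ : (t₀ : EReal) < f x₀) :
    ∃ (L : V →L[ℝ] ℝ) (s u : ℝ), u < L x₀ - s * t₀ ∧
      ∀ (x : V) (t : ℝ), f x ≤ t → L x - s * t < u := by
  obtain ⟨Λ, u, epi_lt, lt_pt⟩ := geometric_hahn_banach_closed_point (x := (x₀, t₀))
    hf.convex_epigraph (isClosed_real_epigraph hlsc) (not_le.2 h₀)
  have split (x : V) (t : ℝ) :
      Λ (x, t) = Λ.comp (ContinuousLinearMap.inl ℝ V ℝ) x - -Λ (0, 1) * t := by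
    have : (x, t) = (x, (0 : ℝ)) + t • ((0 : V), (1 : ℝ)) := by simp
    rw [this, map_add, map_smul]
    simp [mul_comm]
  rw [split] at lt_pt
  exact ⟨_, _, u, lt_pt, fun x t hx => split x t ▸ epi_lt (x, t) hx⟩

variable [CompleteSpace E] {f : E → EReal}

-- The two cases are a non-vertical and a vertical hyperplane separating `(x₀, t₀)` from the
-- epigraph of `f`.
lemma EConvexOn.exists_fenchel_le_or_separating_domain (hconv : EConvexOn f)
    (hlsc : LowerSemicontinuous f) (hdom : ∃ x, f x ≠ ⊤) {x₀ : E} {t₀ : ℝ}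
    (h₀ : (t₀ : EReal) < f x₀) :
    (∃ (μ : E) (c : ℝ), fenchel f μ ≤ c ∧ t₀ < ⟪μ, x₀⟫ - c) ∨
      ∃ (p : E) (u : ℝ), u < ⟪p, x₀⟫ ∧ ∀ x, f x ≠ ⊤ → ⟪p, x⟫ ≤ u := by
  obtain ⟨L, s, u, lt_pt, epi_lt⟩ := hconv.exists_separating_epigraph hlsc h₀
  obtain ⟨p, rfl⟩ := (InnerProductSpace.toDual ℝ E).surjective L
  simp only [InnerProductSpace.toDual_apply_apply] at lt_pt epi_lt
  have s_nonneg : 0 ≤ s := by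
    by_contra! hs
    obtain ⟨x, hx⟩ := hdom
    have key := epi_lt x (max (f x).toReal ((⟪p, x⟫ - u) / s))
      ((EReal.le_coe_toReal hx).trans (EReal.coe_le_coe (le_max_left _ _)))
    have := mul_le_mul_of_nonpos_left (le_max_right (f x).toReal ((⟪p, x⟫ - u) / s)) hs.le
    rw [mul_div_cancel₀ _ hs.ne] at this
    linarith
  rcases s_nonneg.eq_or_lt with rfl | s_pos
  · simp only [zero_mul, sub_zero] at lt_pt epi_lt
    exact .inr ⟨p, u, lt_pt, fun x hx => (epi_lt x _ (EReal.le_coe_toReal hx)).le⟩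
  · refine .inl ⟨s⁻¹ • p, s⁻¹ * u, fenchel_le_coe_iff.2 fun x => ?_, ?_⟩
    · refine EReal.le_of_forall_lt_iff_le.1 fun t ht => EReal.coe_le_coe_iff.2 ?_
      rw [real_inner_smul_left, ← mul_sub, inv_mul_le_iff₀ s_pos]
      linarith [epi_lt x t ht.le]
    · rw [real_inner_smul_left, ← mul_sub, lt_inv_mul_iff₀ s_pos]
      linarith

lemma EConvexOn.exists_fenchel_le (hconv : EConvexOn f) (hlsc : LowerSemicontinuous f)
    (hproper : EProper f) : ∃ (μ : E) (c : ℝ), fenchel f μ ≤ c := by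
  obtain ⟨x, hx⟩ := hproper.2
  obtain ⟨t, ht⟩ := EReal.lt_iff_exists_real_btwn.1 (bot_lt_iff_ne_bot.2 (hproper.1 x))
  rcases hconv.exists_fenchel_le_or_separating_domain hlsc hproper.2 ht.2 with
    ⟨μ, c, hμ, -⟩ | ⟨p, u, lt_x, le_u⟩
  · exact ⟨μ, c, hμ⟩
  · exact absurd (le_u x hx) (not_le.2 lt_x)

-- A vertical hyperplane is tilted by adding a large multiple of it to any affine minorant.
lemma EConvexOn.exists_fenchel_le_and_lt (hconv : EConvexOn f) (hlsc : LowerSemicontinuous f)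
    (hproper : EProper f) {x₀ : E} {t₀ : ℝ} (h₀ : (t₀ : EReal) < f x₀) :
    ∃ (μ : E) (c : ℝ), fenchel f μ ≤ c ∧ t₀ < ⟪μ, x₀⟫ - c := by
  rcases hconv.exists_fenchel_le_or_separating_domain hlsc hproper.2 h₀ with
    h | ⟨p, u, lt_x₀, le_u⟩
  · exact h
  obtain ⟨μ, c, hμ⟩ := hconv.exists_fenchel_le hlsc hproper
  obtain ⟨k, hk⟩ := exists_nat_gt ((t₀ - (⟪μ, x₀⟫ - c)) / (⟪p, x₀⟫ - u))
  rw [div_lt_iff₀ (sub_pos.2 lt_x₀)] at hk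
  refine ⟨μ + (k : ℝ) • p, c + k * u, fenchel_le_coe_iff.2 fun x => ?_, ?_⟩
  · by_cases hx : f x = ⊤
    · simp [hx]
    refine le_trans (EReal.coe_le_coe_iff.2 ?_) (fenchel_le_coe_iff.1 hμ x)
    have := mul_le_mul_of_nonneg_left (le_u x hx) k.cast_nonneg
    rw [inner_add_left, real_inner_smul_left]
    linarith
  · rw [inner_add_left, real_inner_smul_left]
    linarith

theorem EConvexOn.fenchel_fenchel (hconv : EConvexOn f) (hlsc : LowerSemicontinuous f)
    (hproper : EProper f) : fenchel (fenchel f) = f := by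
  ext x
  refine le_antisymm (iSup_le fun μ => ?_) (EReal.ge_of_forall_gt_iff_ge.1 fun t ht => ?_)
  · obtain ⟨y, hy⟩ := hproper.2
    have young := inner_sub_le_fenchel f μ x
    rw [EReal.sub_le_iff_le_add (.inl (hproper.1 x)) (.inr (fenchel_ne_bot hy μ)),
      real_inner_comm] at young
    exact EReal.sub_le_of_le_add' young
  · obtain ⟨μ, c, hμ, lt⟩ := hconv.exists_fenchel_le_and_lt hlsc hproper ht
    calc (t : EReal) ≤ (⟪μ, x⟫ : EReal) - c := by exact_mod_cast lt.le
      _ ≤ (⟪x, μ⟫ : EReal) - fenchel f μ := by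
        rw [real_inner_comm]
        exact EReal.sub_le_sub le_rfl hμ
      _ ≤ fenchel (fenchel f) x := inner_sub_le_fenchel _ _ _

lemma EConvexOn.eProper_fenchel (hconv : EConvexOn f) (hlsc : LowerSemicontinuous f)
    (hproper : EProper f) : EProper (fenchel f) := by
  obtain ⟨x, hx⟩ := hproper.2
  obtain ⟨μ, c, hμ⟩ := hconv.exists_fenchel_le hlsc hproper
  exact ⟨fenchel_ne_bot hx, μ, ne_top_of_le_ne_top (EReal.coe_ne_top c) hμ⟩

end FenchelMoreau

section StronglyConvex

variable {φ : E → EReal} {α : ℝ}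

lemma norm_smul_add_smul_sq (x y : E) {a b : ℝ} (hab : a + b = 1) :
    ‖a • x + b • y‖ ^ 2 = a * ‖x‖ ^ 2 + b * ‖y‖ ^ 2 - a * b * ‖x - y‖ ^ 2 := by
  obtain rfl : b = 1 - a := by linarith
  simp only [norm_add_sq_real, norm_sub_sq_real, norm_smul, mul_pow, Real.norm_eq_abs, sq_abs,
    real_inner_smul_left, real_inner_smul_right]
  ring

lemma StronglyConvexE.apply_le_coe (hφ : StronglyConvexE α φ) {x y : E} {a b s t : ℝ}
    (ha : 0 < a) (hb : 0 < b) (hab : a + b = 1) (hx : φ x ≤ s) (hy : φ y ≤ t) :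
    φ (a • x + b • y) ≤ (a * s + b * t - a * b * (α / 2) * ‖x - y‖ ^ 2 : ℝ) := by
  have sub_le {z : E} {r : ℝ} (hz : φ z ≤ r) :
      φ z - (α / 2 * ‖z‖ ^ 2 : ℝ) ≤ (r - α / 2 * ‖z‖ ^ 2 : ℝ) := by
    rw [EReal.coe_sub]
    exact EReal.sub_le_sub hz le_rfl
  have key := EConvexOn.apply_le_coe hφ ha hb hab (sub_le hx) (sub_le hy)
  rw [EReal.sub_le_iff_le_add (.inl (EReal.coe_ne_bot _)) (.inl (EReal.coe_ne_top _)),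
    ← EReal.coe_add, norm_smul_add_smul_sq x y hab] at key
  convert key using 2
  ring

lemma stronglyConvexE_iSup {ι : Sort*} {φ : ι → E → EReal} (hφ : ∀ i, StronglyConvexE α (φ i)) :
    StronglyConvexE α (fun x => ⨆ i, φ i x) := by
  intro x y a b ha hb hab
  dsimp only
  rw [EReal.sub_le_iff_le_add (.inl (EReal.coe_ne_bot _)) (.inl (EReal.coe_ne_top _))]
  refine iSup_le fun i => ?_
  rw [← EReal.sub_le_iff_le_add (.inl (EReal.coe_ne_bot _)) (.inl (EReal.coe_ne_top _))]
  refine (hφ i x y a b ha hb hab).trans ?_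
  have sub_le (z : E) (r : ℝ) : φ i z - r ≤ (⨆ j, φ j z) - r :=
    EReal.sub_le_sub (le_iSup (φ · z) i) le_rfl
  gcongr
  · exact sub_le _ _
  · exact sub_le _ _

lemma StronglyConvexE.add_inner (hφ : StronglyConvexE α φ) (v : E) :
    StronglyConvexE α (fun x => φ x + (⟪v, x⟫ : EReal)) := by
  have swap (x : E) : φ x + (⟪v, x⟫ : EReal) - (α / 2 * ‖x‖ ^ 2 : ℝ) =
      φ x - (α / 2 * ‖x‖ ^ 2 : ℝ) + (innerₛₗ ℝ v x : ℝ) := by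
    rw [sub_eq_add_neg, add_right_comm, ← sub_eq_add_neg, innerₛₗ_apply_apply]
  simp only [StronglyConvexE, swap]
  exact EConvexOn.add_coe hφ ((innerₛₗ ℝ v).convexOn convex_univ)

lemma StronglyConvexE.eConvexOn (hφ : StronglyConvexE α φ) (hα : 0 ≤ α) : EConvexOn φ := by
  have convex_sq : ConvexOn ℝ univ fun x : E => α / 2 * ‖x‖ ^ 2 :=
    (convexOn_univ_norm.pow (fun _ _ => norm_nonneg _) 2).smul (div_nonneg hα zero_le_two)
  simpa only [EReal.sub_add_cancel] using EConvexOn.add_coe hφ convex_sq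

lemma StronglyConvexE.norm_sub_sq_le (hφ : StronglyConvexE α φ) (hα : 0 < α) {I ε : ℝ}
    (hI : ∀ z, (I : EReal) ≤ φ z) {x y : E} (hx : φ x ≤ (I + ε : ℝ)) (hy : φ y ≤ (I + ε : ℝ)) :
    ‖x - y‖ ^ 2 ≤ 8 / α * ε := by
  have key := (hI _).trans (hφ.apply_le_coe one_half_pos one_half_pos (add_halves 1) hx hy)
  rw [EReal.coe_le_coe_iff] at key
  rw [div_mul_eq_mul_div, le_div_iff₀ hα]
  linarith

section Minimiser

variable [CompleteSpace E]

lemma StronglyConvexE.exists_forall_coe_le (hφ : StronglyConvexE α φ) (hα : 0 < α)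
    (hlsc : LowerSemicontinuous φ) (hproper : EProper φ) :
    ∃ B : ℝ, ∀ x, (B : EReal) ≤ φ x := by
  obtain ⟨v, c, hv⟩ := (hφ.eConvexOn hα.le).exists_fenchel_le hlsc hproper
  obtain ⟨x₀, hx₀⟩ := hproper.2
  set s := (φ x₀).toReal
  refine ⟨2 * ⟪v, x₀⟫ - 2 * c - s - α⁻¹ * ‖v‖ ^ 2, fun x => ?_⟩
  refine EReal.le_of_forall_lt_iff_le.1 fun t ht => EReal.coe_le_coe_iff.2 ?_
  have midpoint_le := (fenchel_le_coe_iff.1 hv _).trans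
    (hφ.apply_le_coe one_half_pos one_half_pos (add_halves 1) ht.le (EReal.le_coe_toReal hx₀))
  rw [EReal.coe_le_coe_iff, inner_add_right, real_inner_smul_right, real_inner_smul_right]
    at midpoint_le
  have complete_square : -(α⁻¹ * ‖v‖ ^ 2) ≤ ⟪v, x - x₀⟫ + α / 4 * ‖x - x₀‖ ^ 2 := by
    have cauchy_schwarz : -(‖v‖ * ‖x - x₀‖) ≤ ⟪v, x - x₀⟫ :=
      neg_le_of_abs_le (abs_real_inner_le_norm v (x - x₀))
    have : 0 ≤ α⁻¹ * (‖v‖ - α / 2 * ‖x - x₀‖) ^ 2 := by positivity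
    have : α⁻¹ * (‖v‖ - α / 2 * ‖x - x₀‖) ^ 2 =
        α⁻¹ * ‖v‖ ^ 2 - ‖v‖ * ‖x - x₀‖ + α / 4 * ‖x - x₀‖ ^ 2 := by
      field_simp
      ring
    linarith
  rw [inner_sub_right] at complete_square
  linarith

lemma StronglyConvexE.exists_forall_le (hφ : StronglyConvexE α φ) (hα : 0 < α)
    (hlsc : LowerSemicontinuous φ) (hproper : EProper φ) : ∃ m, ∀ x, φ m ≤ φ x := by
  obtain ⟨B, hB⟩ := hφ.exists_forall_coe_le hα hlsc hproper
  obtain ⟨I, hI⟩ : ∃ I : ℝ, ⨅ x, φ x = I := by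
    obtain ⟨x, hx⟩ := hproper.2
    exact ⟨_, (EReal.coe_toReal (ne_top_of_le_ne_top hx (iInf_le φ x))
      (ne_bot_of_le_ne_bot (EReal.coe_ne_bot B) (le_iInf hB))).symm⟩
  have I_le (x : E) : (I : EReal) ≤ φ x := hI ▸ iInf_le φ x
  let ε (n : ℕ) : ℝ := 1 / ((n : ℝ) + 1)
  have ε_tendsto : Tendsto ε atTop (𝓝 0) := tendsto_one_div_add_atTop_nhds_zero_nat
  have exists_approx (n : ℕ) : ∃ x, φ x ≤ (I + ε n : ℝ) := by
    have : ⨅ x, φ x < (I + ε n : ℝ) := by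
      rw [hI, EReal.coe_lt_coe_iff]
      exact lt_add_of_pos_right I Nat.one_div_pos_of_nat
    exact (iInf_lt_iff.1 this).imp fun _ => le_of_lt
  choose u hu using exists_approx
  have hu_le {n k : ℕ} (hnk : n ≤ k) : φ (u k) ≤ (I + ε n : ℝ) :=
    (hu k).trans (EReal.coe_le_coe_iff.2 (by gcongr; exact Nat.one_div_le_one_div hnk))
  have u_cauchy : CauchySeq u := by
    refine cauchySeq_of_le_tendsto_0' (fun n => √(8 / α * ε n)) (fun n k hnk => ?_) ?_
    · rw [dist_eq_norm]
      exact Real.le_sqrt_of_sq_le (hφ.norm_sub_sq_le hα I_le (hu n) (hu_le hnk))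
    · simpa using (ε_tendsto.const_mul (8 / α)).sqrt
  obtain ⟨m, hm⟩ := cauchySeq_tendsto_of_complete u_cauchy
  have m_le (n : ℕ) : φ m ≤ (I + ε n : ℝ) :=
    (hlsc.isClosed_preimage _).mem_of_tendsto hm
      ((eventually_ge_atTop n).mono fun _ => hu_le)
  have : φ m ≤ I := by
    have : Tendsto (fun n => ((I + ε n : ℝ) : EReal)) atTop (𝓝 I) :=
      EReal.tendsto_coe.2 (by simpa using ε_tendsto.const_add I)
    exact ge_of_tendsto' this m_le
  exact ⟨m, fun x => this.trans (I_le x)⟩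

lemma StronglyConvexE.exists_eSubgradAt (hφ : StronglyConvexE α φ) (hα : 0 < α)
    (hlsc : LowerSemicontinuous φ) (hproper : EProper φ) (μ : E) : ∃ m, ESubgradAt φ m μ := by
  let ψ (x : E) : EReal := φ x + (⟪-μ, x⟫ : EReal)
  have ψ_proper : EProper ψ :=
    ⟨fun x => by simp [ψ, EReal.add_eq_bot_iff, hproper.1 x],
      hproper.2.imp fun x hx => by simp [ψ, EReal.add_ne_top_iff_ne_top_left, hx]⟩
  have ψ_lsc : LowerSemicontinuous ψ :=
    lowerSemicontinuous_add_coe hlsc (continuous_const.inner continuous_id)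
  obtain ⟨m, hm⟩ := (hφ.add_inner (-μ)).exists_forall_le hα ψ_lsc ψ_proper
  refine ⟨m, fun y => ?_⟩
  have cancel (z : E) : φ z + (⟪-μ, z⟫ : EReal) + (⟪μ, y⟫ : EReal) =
      φ z + (⟪μ, y - z⟫ : EReal) := by
    rw [add_assoc, ← EReal.coe_add, inner_neg_left, inner_sub_right, neg_add_eq_sub]
  simpa only [ψ, cancel, sub_self, inner_zero_right, EReal.coe_zero, add_zero] using
    add_le_add_left (hm y) (⟪μ, y⟫ : EReal)

end Minimiser

lemma ESubgradAt.exists_eq_coe {x μ : E} (h : ESubgradAt φ x μ) (hφ : EProper φ) :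
    ∃ c : ℝ, φ x = c := by
  obtain ⟨y, hy⟩ := hφ.2
  have : φ x ≠ ⊤ := fun hx => hy (by simpa [hx] using h y)
  exact ⟨_, (EReal.coe_toReal this (hφ.1 x)).symm⟩

lemma StronglyConvexE.tangentQuadratic_le (hφ : StronglyConvexE α φ) {x μ : E}
    (h : ESubgradAt φ x μ) {c : ℝ} (hc : φ x = c) (y : E) :
    (tangentQuadratic α c x μ y : EReal) ≤ φ y := by
  refine EReal.le_of_forall_lt_iff_le.1 fun t ht => EReal.coe_le_coe_iff.2 ?_
  have chord {b : ℝ} (hb : b ∈ Ioo (0 : ℝ) 1) :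
      c + ⟪μ, y - x⟫ + (1 - b) * (α / 2 * ‖y - x‖ ^ 2) ≤ t := by
    have key := (h _).trans
      (hφ.apply_le_coe (sub_pos.2 hb.2) hb.1 (sub_add_cancel 1 b) hc.le ht.le)
    have direction : (1 - b) • x + b • y - x = b • (y - x) := by module
    rw [hc, ← EReal.coe_add, EReal.coe_le_coe_iff, direction, real_inner_smul_right,
      norm_sub_rev] at key
    refine le_of_mul_le_mul_left ?_ hb.1
    linarith
  have lim : Tendsto (fun b : ℝ => c + ⟪μ, y - x⟫ + (1 - b) * (α / 2 * ‖y - x‖ ^ 2))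
      (𝓝[>] 0) (𝓝 (tangentQuadratic α c x μ y)) := by
    refine Tendsto.mono_left ?_ nhdsWithin_le_nhds
    exact Continuous.tendsto' (by fun_prop) _ _ (by simp [tangentQuadratic])
  exact le_of_tendsto lim (mem_of_superset (Ioo_mem_nhdsGT one_pos) fun _ => chord)

lemma StronglyConvexE.norm_sub_le_of_eSubgradAt (hφ : StronglyConvexE α φ) (hα : 0 < α)
    (hproper : EProper φ) {x y μ ν : E} (hx : ESubgradAt φ x μ) (hy : ESubgradAt φ y ν) :
    ‖x - y‖ ≤ α⁻¹ * ‖μ - ν‖ := by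
  obtain ⟨c, hc⟩ := hx.exists_eq_coe hproper
  obtain ⟨d, hd⟩ := hy.exists_eq_coe hproper
  have at_y := hφ.tangentQuadratic_le hx hc y
  have at_x := hφ.tangentQuadratic_le hy hd x
  rw [hd, EReal.coe_le_coe_iff, tangentQuadratic, norm_sub_rev, ← neg_sub x y, inner_neg_right]
    at at_y
  rw [hc, EReal.coe_le_coe_iff, tangentQuadratic] at at_x
  have strongly_monotone : α * ‖x - y‖ ^ 2 ≤ ⟪μ - ν, x - y⟫ := by
    rw [inner_sub_left]
    linarith
  have := strongly_monotone.trans (real_inner_le_norm _ _)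
  rw [le_inv_mul_iff₀ hα]
  rcases (norm_nonneg (x - y)).eq_or_lt with h | h
  · rw [← h, mul_zero]
    exact norm_nonneg _
  · refine le_of_mul_le_mul_right ?_ h
    linarith

end StronglyConvex

section Smooth

section Taylor

variable {V F : Type*} [NormedAddCommGroup V] [NormedSpace ℝ V] [NormedAddCommGroup F]
  [NormedSpace ℝ F] {g : V → F}

lemma norm_sub_sub_le_of_lipschitzWith_fderiv {g' : V → V →L[ℝ] F} {K : ℝ≥0}
    (hg : ∀ x, HasFDerivAt g (g' x) x) (hg' : LipschitzWith K g') (x y : V) :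
    ‖g y - g x - g' x (y - x)‖ ≤ K / 2 * ‖y - x‖ ^ 2 := by
  set d := y - x
  have curve_deriv (t : ℝ) : HasDerivAt (fun t : ℝ => g (x + t • d) - g x - t • g' x d)
      (g' (x + t • d) d - g' x d) t := by
    have line : HasDerivAt (fun t : ℝ => x + t • d) d t := by
      simpa using ((hasDerivAt_id t).smul_const d).const_add x
    have linear : HasDerivAt (fun t : ℝ => t • g' x d) (g' x d) t := by
      simpa using (hasDerivAt_id t).smul_const (g' x d)
    exact (((hg _).comp_hasDerivAt t line).sub_const (g x)).sub linear
  have bound_deriv (t : ℝ) :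
      HasDerivAt (fun t : ℝ => K / 2 * ‖d‖ ^ 2 * t ^ 2) (K * ‖d‖ ^ 2 * t) t :=
    ((hasDerivAt_pow 2 t).const_mul (K / 2 * ‖d‖ ^ 2)).congr_deriv (by push_cast; ring)
  have deriv_le (t : ℝ) (ht : t ∈ Ico (0 : ℝ) 1) :
      ‖g' (x + t • d) d - g' x d‖ ≤ K * ‖d‖ ^ 2 * t :=
    calc ‖(g' (x + t • d) - g' x) d‖ ≤ ‖g' (x + t • d) - g' x‖ * ‖d‖ :=
          ContinuousLinearMap.le_opNorm _ _
      _ ≤ K * ‖t • d‖ * ‖d‖ := by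
        gcongr
        simpa using hg'.norm_sub_le (x + t • d) x
      _ = K * ‖d‖ ^ 2 * t := by
        rw [norm_smul, Real.norm_of_nonneg ht.1]
        ring
  have := image_norm_le_of_norm_deriv_right_le_deriv_boundary
    (fun t _ => (curve_deriv t).continuousAt.continuousWithinAt)
    (fun t _ => (curve_deriv t).hasDerivWithinAt) (by simp) bound_deriv deriv_le
    (right_mem_Icc.2 zero_le_one)
  simpa [d] using this

lemma hasFDerivAt_of_norm_sub_sub_le {g' : V →L[ℝ] F} {x : V} {C : ℝ}
    (h : ∀ y, ‖g y - g x - g' (y - x)‖ ≤ C * ‖y - x‖ ^ 2) : HasFDerivAt g g' x := by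
  refine .of_isLittleO (Asymptotics.IsBigO.trans_isLittleO (.of_bound C (.of_forall fun y => ?_))
    (Asymptotics.isLittleO_pow_sub_sub x one_lt_two))
  simpa using h y

end Taylor

lemma fenchel_eq_iSup_tangentQuadratic {g : E → ℝ} {g' : E → E} {β : ℝ}
    (hβ : 0 < β)
    (h : ∀ x y, g y ≤ tangentQuadratic β (g x) x (g' x) y) (μ : E) :
    fenchel (fun x => (g x : EReal)) μ =
      ⨆ x, (tangentQuadratic β⁻¹ (⟪x, g' x⟫ - g x) (g' x) x μ : EReal) := by
  refine le_antisymm (iSup_mono fun x => ?_) (iSup_le fun x => ?_)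
  · rw [← EReal.coe_sub, EReal.coe_le_coe_iff, tangentQuadratic, inner_sub_right, real_inner_comm]
    have : 0 ≤ β⁻¹ / 2 * ‖μ - g' x‖ ^ 2 := by positivity
    linarith
  · rw [← fenchel_tangentQuadratic hβ]
    exact fenchel_anti (fun y => EReal.coe_le_coe_iff.2 (h x y)) μ

variable [CompleteSpace E] {g : E → ℝ} {g' : E → E}

lemma le_tangentQuadratic_of_lipschitzWith_gradient {K : ℝ≥0} (hg : ∀ x, HasGradientAt g (g' x) x)
    (hg' : LipschitzWith K g') (x y : E) : g y ≤ tangentQuadratic K (g x) x (g' x) y := by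
  have lipschitz : LipschitzWith K (fun x => InnerProductSpace.toDual ℝ E (g' x)) :=
    fun y z => by simpa only [LinearIsometryEquiv.edist_map] using hg' y z
  have := (le_abs_self _).trans (norm_sub_sub_le_of_lipschitzWith_fderiv hg lipschitz x y)
  rw [InnerProductSpace.toDual_apply_apply] at this
  unfold tangentQuadratic
  linarith

lemma hasGradientAt_of_le_tangentQuadratic {x v : E} {C : ℝ}
    (lower : ∀ y, g x + ⟪v, y - x⟫ ≤ g y) (upper : ∀ y, g y ≤ tangentQuadratic C (g x) x v y) :
    HasGradientAt g v x := by
  refine hasFDerivAt_of_norm_sub_sub_le (C := C / 2) fun y => ?_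
  have := upper y
  rw [tangentQuadratic] at this
  rw [InnerProductSpace.toDual_apply_apply, Real.norm_of_nonneg (by linarith [lower y])]
  linarith

/-- `β`-smoothness in the sense of convex optimisation: `f` is finite-valued and differentiable,
with a `β`-Lipschitz gradient. Meant for `0 ≤ β`: `β.toNNReal` sends negative numbers to `0`. -/
def ESmooth (β : ℝ) (f : E → EReal) : Prop :=
  ∃ (g : E → ℝ) (g' : E → E), (∀ x, f x = (g x : EReal)) ∧
    (∀ x, HasGradientAt g (g' x) x) ∧ LipschitzWith β.toNNReal g'

variable {f : E → EReal} {β : ℝ}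

lemma ESmooth.exists_fenchel_eq_iSup (hf : ESmooth β f) (hβ : 0 < β) :
    ∃ (g : E → ℝ) (g' : E → E), fenchel f =
      fun μ => ⨆ x, (tangentQuadratic β⁻¹ (⟪x, g' x⟫ - g x) (g' x) x μ : EReal) := by
  obtain ⟨g, g', hfg, hg, hg'⟩ := hf
  obtain rfl : f = fun x => (g x : EReal) := funext hfg
  refine ⟨g, g', funext (fenchel_eq_iSup_tangentQuadratic hβ fun x y => ?_)⟩
  simpa [hβ.le] using le_tangentQuadratic_of_lipschitzWith_gradient hg hg' x y

theorem ESmooth.stronglyConvexE_fenchel (hf : ESmooth β f) (hβ : 0 < β) :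
    StronglyConvexE β⁻¹ (fenchel f) := by
  obtain ⟨g, g', hfenchel⟩ := hf.exists_fenchel_eq_iSup hβ
  rw [hfenchel]
  exact stronglyConvexE_iSup fun x => stronglyConvexE_tangentQuadratic _ _ _ _

theorem ESmooth.eCoercive_fenchel (hf : ESmooth β f) (hβ : 0 < β) : ECoercive (fenchel f) := by
  obtain ⟨g, g', hfenchel⟩ := hf.exists_fenchel_eq_iSup hβ
  intro M
  obtain ⟨R, hR⟩ := eCoercive_tangentQuadratic (inv_pos.2 hβ) (⟪(0 : E), g' 0⟫ - g 0) (g' 0) 0 M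
  exact ⟨R, fun μ hμ => (hR μ hμ).trans (hfenchel ▸ le_iSup_of_le 0 le_rfl)⟩

theorem StronglyConvexE.eSmooth_fenchel {φ : E → EReal} {α : ℝ} (hφ : StronglyConvexE α φ)
    (hα : 0 < α) (hlsc : LowerSemicontinuous φ) (hproper : EProper φ) :
    ESmooth α⁻¹ (fenchel φ) := by
  choose m hm using hφ.exists_eSubgradAt hα hlsc hproper
  choose k hk using fun μ => (hm μ).exists_eq_coe hproper
  let g (μ : E) : ℝ := ⟪μ, m μ⟫ - k μ
  have fenchel_eq (μ : E) : fenchel φ μ = (g μ : EReal) := fenchel_eq_of_eSubgradAt (hm μ) (hk μ)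
  have lower (μ ν : E) : g μ + ⟪m μ, ν - μ⟫ ≤ g ν := by
    have := inner_sub_le_fenchel φ ν (m μ)
    rw [fenchel_eq, hk, ← EReal.coe_sub, EReal.coe_le_coe_iff] at this
    simp only [g, real_inner_comm _ (m μ), inner_sub_left] at this ⊢
    linarith
  have upper (μ ν : E) : g ν ≤ tangentQuadratic α⁻¹ (g μ) μ (m μ) ν := by
    have := fenchel_anti (hφ.tangentQuadratic_le (hm μ) (hk μ)) ν
    rwa [fenchel_tangentQuadratic hα, fenchel_eq, EReal.coe_le_coe_iff, real_inner_comm] at this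
  refine ⟨g, m, fenchel_eq, fun μ => hasGradientAt_of_le_tangentQuadratic (lower μ) (upper μ),
    .of_dist_le_mul fun μ ν => ?_⟩
  rw [dist_eq_norm, dist_eq_norm, Real.coe_toNNReal _ (inv_nonneg.2 hα.le)]
  exact hφ.norm_sub_le_of_eSubgradAt hα hproper (hm μ) (hm ν)

theorem eSmooth_iff_stronglyConvexE_fenchel (hβ : 0 < β) (hproper : EProper f)
    (hconv : EConvexOn f) (hlsc : LowerSemicontinuous f) :
    ESmooth β f ↔ StronglyConvexE β⁻¹ (fenchel f) := by
  refine ⟨fun hf => hf.stronglyConvexE_fenchel hβ, fun hφ => ?_⟩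
  have := hφ.eSmooth_fenchel (inv_pos.2 hβ) (lowerSemicontinuous_fenchel f)
    (hconv.eProper_fenchel hlsc hproper)
  rwa [hconv.fenchel_fenchel hlsc hproper, inv_inv] at this

end Smooth

/-- Duality between Lipschitz gradients and strong convexity: a proper convex lsc `f` is
finite-valued and Fréchet differentiable with `β`-Lipschitz gradient iff `f*` is
`(1/β)`-strongly convex; in that case `f*` is moreover coercive. -/
theorem stmt7 [CompleteSpace E] (β : ℝ) (hβ : 0 < β) (f : E → EReal)
    (hproper : EProper f) (hconv : EConvexOn f) (hlsc : LowerSemicontinuous f) :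
    ((∃ (g : E → ℝ) (g' : E → E), (∀ x, f x = (g x : EReal)) ∧
        (∀ x, HasGradientAt g (g' x) x) ∧ LipschitzWith β.toNNReal g') ↔
      StronglyConvexE (1 / β) (fenchel f)) ∧
    ((∃ (g : E → ℝ) (g' : E → E), (∀ x, f x = (g x : EReal)) ∧
        (∀ x, HasGradientAt g (g' x) x) ∧ LipschitzWith β.toNNReal g') →
      ECoercive (fenchel f)) := by
  rw [one_div]
  exact ⟨eSmooth_iff_stronglyConvexE_fenchel hβ hproper hconv hlsc, fun hf =>
    ESmooth.eCoercive_fenchel hf hβ⟩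
end
end

section
/- Let E be a real Hilbert space and f : E → ℝ ∪ {+∞} be proper, convex and lower semicontinuous. Then its perspective function f̃ : E × ℝ → ℝ ∪ {+∞} is proper, convex and lower semicontinuous, and its Fenchel conjugate satisfies, for all (μ, z) ∈ E × ℝ, (f̃)*(μ, z) = 0 if f*(μ) ≤ −z and (f̃)*(μ, z) = +∞ otherwise; that is, (f̃)*(μ, z) is the indicator function of the epigraph of f* evaluated at (μ, −z). -/
open scoped Classical
open scoped RealInnerProductSpace

noncomputable section

variable {E : Type*} [NormedAddCommGroup E] [InnerProductSpace ℝ E]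

/-- The perspective function of `f`: `f̃(x,s) = s f(x/s)` for `s > 0`,
`f̃(x,0) = sup_{y ∈ dom f} (f(y+x) - f(y))`, and `+∞` for `s < 0`. -/
def perspective (f : E → EReal) (p : E × ℝ) : EReal :=
  if 0 < p.2 then (p.2 : EReal) * f (p.2⁻¹ • p.1)
  else if p.2 = 0 then ⨆ y : {y : E // f y ≠ ⊤}, (f ((y : E) + p.1) - f (y : E))
  else ⊤

/-- The Fenchel conjugate of a function on `E × ℝ`, with respect to the canonical pairing
`⟨(μ,z),(x,s)⟩ = ⟨μ,x⟩ + z s`. -/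
def conjProd (g : E × ℝ → EReal) (μ : E) (z : ℝ) : EReal :=
  ⨆ p : E × ℝ, ((⟪μ, p.1⟫ + z * p.2 : ℝ) : EReal) - g p

/-!
The perspective of `f` is the support function of the set of continuous affine minorants `φ - c`
of `f` (the epigraph of `f*`): `f̃ (x, s) = sup (φ x - c s)`. For `0 < s` this is Fenchel–Moreau.
At `s = 0`, an inequality `f (y + x) ≤ C + f y` for all `y` in the domain iterates to
`f (y + n x) ≤ n C + f y`, so no minorant has slope above `C` along `x`; at `s < 0` the constants
`c` can be taken arbitrarily large. Convexity and lower semicontinuity follow, `f̃` being a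
supremum of continuous linear functionals.

For the conjugate, `f̃ (0, 0) = 0` gives `f̃* ≥ 0`. If `⟨μ, ·⟩ + z` minorizes `f`, then
`⟨μ, x⟩ + z s` minorizes `f̃`, so `f̃* (μ, z) = 0`. Otherwise `⟨μ, x⟩ + z > f x` for some `x`, and
since `f̃` is linear on the ray through `(x, 1)`, scaling this gap gives `f̃* (μ, z) = +∞`.
-/

theorem nonpos_of_forall_nsmul_le {M : Type*} [AddCommMonoid M] [LinearOrder M]
    [AddLeftStrictMono M] [Archimedean M] {a b : M} (h : ∀ n : ℕ, n • a ≤ b) : a ≤ 0 := by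
  by_contra! ha
  obtain ⟨n, hn⟩ := exists_lt_nsmul ha b
  exact hn.not_ge (h n)

/-- The epigraph of an extended-real-valued function, as a subset of `V × ℝ`: only finite heights
are recorded, so that it lives in a real vector space, where sets can be separated. -/
def realEpigraph {V : Type*} (f : V → EReal) : Set (V × ℝ) := {p | f p.1 ≤ p.2}

section Convexity

variable {V : Type*} [AddCommMonoid V] [Module ℝ V]

theorem econvexOn_coe {g : V → ℝ} (hg : ConvexOn ℝ Set.univ g) :
    EConvexOn fun x => (g x : EReal) := by
  intro x y a b ha hb hab
  have hab_le := hg.2 (Set.mem_univ x) (Set.mem_univ y) ha.le hb.le hab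
  exact (EReal.coe_le_coe_iff.mpr hab_le).trans_eq (by simp)

protected theorem EConvexOn.iSup {ι : Sort*} {g : ι → V → EReal} (hg : ∀ i, EConvexOn (g i)) :
    EConvexOn fun x => ⨆ i, g i x := by
  intro x y a b ha hb hab
  refine iSup_le fun i => (hg i x y a b ha hb hab).trans ?_
  gcongr
  · exact le_iSup (g · x) i
  · exact le_iSup (g · y) i

theorem EConvexOn.convex_realEpigraph {f : V → EReal} (hf : EConvexOn f) :
    Convex ℝ (realEpigraph f) := by
  rw [convex_iff_forall_pos]
  rintro ⟨x, r⟩ hx ⟨y, t⟩ hy a b ha hb hab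
  calc f (a • x + b • y) ≤ a * f x + b * f y := hf x y a b ha hb hab
    _ ≤ a * r + b * t := by gcongr; exacts [hx, hy]
    _ = ((a * r + b * t : ℝ) : EReal) := by push_cast; rfl

end Convexity

theorem isClosed_realEpigraph {V : Type*} [TopologicalSpace V] {f : V → EReal}
    (hf : LowerSemicontinuous f) : IsClosed (realEpigraph f) :=
  hf.isClosed_epigraph.preimage
    (continuous_fst.prodMk (continuous_coe_real_ereal.comp continuous_snd))

section AffineMinorants

variable {V : Type*} [AddCommGroup V] [Module ℝ V] [TopologicalSpace V]

/-- The continuous affine minorants `y ↦ φ y - c` of `f`, encoded as the pairs `(φ, c)`. This is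
the epigraph of the conjugate of `f`, taken in the topological dual. -/
def affineMinorants (f : V → EReal) : Set (StrongDual ℝ V × ℝ) :=
  {q | ∀ y, ((q.1 y - q.2 : ℝ) : EReal) ≤ f y}

theorem mem_affineMinorants_of_le {f : V → EReal} {φ : StrongDual ℝ V} {c d : ℝ}
    (h : (φ, c) ∈ affineMinorants f) (hcd : c ≤ d) : (φ, d) ∈ affineMinorants f := fun y =>
  (EReal.coe_le_coe_iff.mpr (sub_le_sub_left hcd (φ y))).trans (h y)

theorem smul_mem_affineMinorants {f : V → EReal} {φ : StrongDual ℝ V} {b u : ℝ} (hb : 0 < b)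
    (h : ∀ p ∈ realEpigraph f, φ p.1 - b * p.2 ≤ u) :
    (b⁻¹ • φ, b⁻¹ * u) ∈ affineMinorants f := by
  intro y
  refine EReal.le_of_forall_lt_iff_le.mp fun t ht => EReal.coe_le_coe_iff.mpr ?_
  have hyt : φ y - u ≤ b * t := by linarith [h (y, t) ht.le]
  calc b⁻¹ * φ y - b⁻¹ * u = b⁻¹ * (φ y - u) := by ring
    _ ≤ t := (inv_mul_le_iff₀ hb).mpr hyt

variable [IsTopologicalAddGroup V] [ContinuousSMul ℝ V] [LocallyConvexSpace ℝ V]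

theorem exists_separation_realEpigraph {f : V → EReal} (hconv : EConvexOn f)
    (hlsc : LowerSemicontinuous f) (hdom : ∃ y, f y ≠ ⊤) {x : V} {r : ℝ} (hr : r < f x) :
    ∃ (φ : StrongDual ℝ V) (b u : ℝ), 0 ≤ b ∧ u < φ x - b * r ∧
      ∀ p ∈ realEpigraph f, φ p.1 - b * p.2 < u := by
  obtain ⟨g, u, hgu, hux⟩ := geometric_hahn_banach_closed_point hconv.convex_realEpigraph
    (isClosed_realEpigraph hlsc) (x := (x, r)) (fun h => hr.not_ge h)
  let φ : StrongDual ℝ V := g.comp (.inl ℝ V ℝ)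
  let b : ℝ := -g (0, 1)
  have hg (p : V × ℝ) : g p = φ p.1 - b * p.2 := by
    have hp : p = (p.1, 0) + p.2 • ((0 : V), (1 : ℝ)) := by simp
    rw [hp, map_add, map_smul]
    simp [φ, b, mul_comm]
  refine ⟨φ, b, u, ?_, hg (x, r) ▸ hux, fun p hp => hg p ▸ hgu p hp⟩
  obtain ⟨y, hy⟩ := hdom
  have hray (k : ℕ) : k • -b ≤ u - g (y, (f y).toReal) := by
    have hmem : (y, (f y).toReal + k) ∈ realEpigraph f :=
      (EReal.le_coe_toReal hy).trans (EReal.coe_le_coe_iff.mpr (by simp))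
    have hlt := hgu _ hmem
    rw [hg] at hlt ⊢
    rw [nsmul_eq_mul]
    linarith
  exact neg_nonpos.mp (nonpos_of_forall_nsmul_le hray)

theorem exists_nonvertical_separation {f : V → EReal} (hproper : EProper f)
    (hconv : EConvexOn f) (hlsc : LowerSemicontinuous f) :
    ∃ (φ : StrongDual ℝ V) (b u : ℝ), 0 < b ∧ ∀ p ∈ realEpigraph f, φ p.1 - b * p.2 < u := by
  obtain ⟨hbot, y, hy⟩ := hproper
  obtain ⟨r, -, hr⟩ := EReal.lt_iff_exists_real_btwn.mp (bot_lt_iff_ne_bot.mpr (hbot y))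
  obtain ⟨φ, b, u, -, hu, h⟩ := exists_separation_realEpigraph hconv hlsc ⟨y, hy⟩ hr
  refine ⟨φ, b, u, ?_, h⟩
  have hry : r < (f y).toReal := EReal.coe_lt_coe_iff.mp (hr.trans_le (EReal.le_coe_toReal hy))
  have hyu : φ y - b * (f y).toReal < u := h (y, _) (EReal.le_coe_toReal hy)
  nlinarith

theorem exists_mem_affineMinorants_lt {f : V → EReal} (hproper : EProper f)
    (hconv : EConvexOn f) (hlsc : LowerSemicontinuous f) {x : V} {r : ℝ} (hr : r < f x) :
    ∃ q ∈ affineMinorants f, r < q.1 x - q.2 := by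
  obtain ⟨φ, b, u, hb, hxr, h⟩ := exists_separation_realEpigraph hconv hlsc hproper.2 hr
  obtain ⟨φ₀, b₀, u₀, hb₀, h₀⟩ := exists_nonvertical_separation hproper hconv hlsc
  -- The hyperplane separating `(x, r)` may be vertical; adding a large multiple of it to a
  -- nonvertical one gives a nonvertical hyperplane that still passes above `(x, r)`.
  obtain ⟨k, hk⟩ := exists_nat_gt ((u₀ + b₀ * r - φ₀ x) / (φ x - b * r - u))
  rw [div_lt_iff₀ (by linarith)] at hk
  have hbk : 0 < b₀ + k * b := by positivity
  refine ⟨_, smul_mem_affineMinorants (φ := φ₀ + (k : ℝ) • φ) (u := u₀ + k * u) hbk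
    fun p hp => ?_, ?_⟩
  · have hkp := mul_le_mul_of_nonneg_left (h p hp).le k.cast_nonneg
    simp only [add_apply, smul_apply, smul_eq_mul]
    linarith [h₀ p hp]
  · simp only [add_apply, smul_apply, smul_eq_mul]
    rw [← mul_sub, lt_inv_mul_iff₀ hbk]
    linarith

theorem affineMinorants_nonempty {f : V → EReal} (hproper : EProper f)
    (hconv : EConvexOn f) (hlsc : LowerSemicontinuous f) : (affineMinorants f).Nonempty := by
  obtain ⟨φ, b, u, hb, h⟩ := exists_nonvertical_separation hproper hconv hlsc
  exact ⟨_, smul_mem_affineMinorants hb fun p hp => (h p hp).le⟩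

theorem iSup_affineMinorants_eq {f : V → EReal} (hproper : EProper f)
    (hconv : EConvexOn f) (hlsc : LowerSemicontinuous f) (x : V) :
    ⨆ q : affineMinorants f, ((q.1.1 x - q.1.2 : ℝ) : EReal) = f x := by
  refine le_antisymm (iSup_le fun q => q.2 x) (EReal.ge_of_forall_gt_iff_ge.mp fun r hr => ?_)
  obtain ⟨q, hq, hrq⟩ := exists_mem_affineMinorants_lt hproper hconv hlsc hr
  exact le_iSup_of_le (⟨q, hq⟩ : affineMinorants f) (EReal.coe_le_coe_iff.mpr hrq.le)

end AffineMinorants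

theorem apply_add_nsmul_le {V : Type*} [AddMonoid V] {f : V → EReal} {x : V} {C : ℝ}
    (h : ∀ y, f y ≠ ⊤ → f (y + x) ≤ C + f y) {y : V} (hy : f y ≠ ⊤) (n : ℕ) :
    f (y + n • x) ≤ (n * C : ℝ) + f y := by
  induction n with
  | zero => simp
  | succ n ih =>
    have hn : f (y + n • x) ≠ ⊤ := ne_top_of_le_ne_top (EReal.add_ne_top (EReal.coe_ne_top _) hy) ih
    calc f (y + (n + 1) • x) = f (y + n • x + x) := by rw [succ_nsmul, add_assoc]
      _ ≤ C + f (y + n • x) := h _ hn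
      _ ≤ C + ((n * C : ℝ) + f y) := by gcongr
      _ = ((n + 1 : ℕ) * C : ℝ) + f y := by
        rw [← add_assoc, ← EReal.coe_add]; congr 2; push_cast; ring

theorem perspective_of_pos (f : E → EReal) (x : E) {s : ℝ} (hs : 0 < s) :
    perspective f (x, s) = s * f (s⁻¹ • x) :=
  if_pos hs

theorem perspective_zero (f : E → EReal) (x : E) :
    perspective f (x, 0) = ⨆ y : {y : E // f y ≠ ⊤}, (f (y + x) - f y) := by
  simp [perspective]

theorem perspective_of_neg (f : E → EReal) (x : E) {s : ℝ} (hs : s < 0) :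
    perspective f (x, s) = ⊤ := by
  simp [perspective, hs.not_gt, hs.ne]

theorem perspective_zero_le_iff {f : E → EReal} (hbot : ∀ y, f y ≠ ⊥) {x : E} {C : EReal} :
    perspective f (x, 0) ≤ C ↔ ∀ y, f y ≠ ⊤ → f (y + x) ≤ C + f y := by
  rw [perspective_zero, iSup_le_iff, Subtype.forall]
  exact forall₂_congr fun y hy =>
    EReal.sub_le_iff_le_add (.inl (hbot y)) (.inl hy)

protected theorem EProper.perspective {f : E → EReal} (hf : EProper f) :
    EProper (perspective f) := by
  obtain ⟨hbot, y, hy⟩ := hf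
  refine ⟨fun ⟨x, s⟩ => ?_, (y, 1), by simpa [perspective] using hy⟩
  rcases lt_trichotomy s 0 with hs | rfl | hs
  · simp [perspective_of_neg f x hs]
  · have hne : f (y + x) - f y ≠ ⊥ := by
      simp [sub_eq_add_neg, EReal.add_eq_bot_iff, hbot, hy]
    rw [perspective_zero]
    exact ne_bot_of_le_ne_bot hne (le_iSup (fun y : {y : E // f y ≠ ⊤} => f (y + x) - f y) ⟨y, hy⟩)
  · rw [perspective_of_pos f x hs, EReal.mul_ne_bot]
    simp [hbot, hs.le]

theorem apply_le_perspective_zero {f : E → EReal} (hf : EProper f) {q : StrongDual ℝ E × ℝ}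
    (hq : q ∈ affineMinorants f) (x : E) : q.1 x ≤ perspective f (x, 0) := by
  obtain ⟨hbot, y, hy⟩ := hf
  refine EReal.le_of_forall_lt_iff_le.mp fun C hC => EReal.coe_le_coe_iff.mpr ?_
  have hstep := (perspective_zero_le_iff hbot).mp hC.le
  have hslope (n : ℕ) : n • (q.1 x - C) ≤ (f y).toReal - (q.1 y - q.2) := by
    have hn := (hq (y + n • x)).trans (apply_add_nsmul_le hstep hy n)
    rw [← EReal.coe_toReal hy (hbot y), ← EReal.coe_add, EReal.coe_le_coe_iff, map_add,
      map_nsmul, nsmul_eq_mul] at hn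
    rw [nsmul_eq_mul]
    linarith
  exact sub_nonpos.mp (nonpos_of_forall_nsmul_le hslope)

theorem le_perspective_of_mem_affineMinorants {f : E → EReal} (hf : EProper f)
    {q : StrongDual ℝ E × ℝ} (hq : q ∈ affineMinorants f) (p : E × ℝ) :
    ((q.1 p.1 - q.2 * p.2 : ℝ) : EReal) ≤ perspective f p := by
  obtain ⟨x, s⟩ := p
  rcases lt_trichotomy s 0 with hs | rfl | hs
  · simp [perspective_of_neg f x hs]
  · simpa using apply_le_perspective_zero hf hq x
  · rw [perspective_of_pos f x hs]
    calc ((q.1 x - q.2 * s : ℝ) : EReal) = s * ((q.1 (s⁻¹ • x) - q.2 : ℝ) : EReal) := by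
          rw [← EReal.coe_mul, map_smul, smul_eq_mul, mul_sub, mul_inv_cancel_left₀ hs.ne',
            mul_comm s]
      _ ≤ s * f (s⁻¹ • x) :=
        mul_le_mul_of_nonneg_left (hq _) (by exact_mod_cast hs.le)

theorem perspective_eq_iSup {f : E → EReal} (hproper : EProper f) (hconv : EConvexOn f)
    (hlsc : LowerSemicontinuous f) (p : E × ℝ) :
    perspective f p =
      ⨆ q : affineMinorants f, ((q.1.1 p.1 - q.1.2 * p.2 : ℝ) : EReal) := by
  refine le_antisymm ?_
    (iSup_le fun q => le_perspective_of_mem_affineMinorants hproper q.2 p)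
  have hle (q : affineMinorants f) := le_iSup
    (fun q : affineMinorants f => ((q.1.1 p.1 - q.1.2 * p.2 : ℝ) : EReal)) q
  have hf := iSup_affineMinorants_eq hproper hconv hlsc
  obtain ⟨⟨φ, c⟩, hφ⟩ := affineMinorants_nonempty hproper hconv hlsc
  obtain ⟨x, s⟩ := p
  rcases lt_trichotomy s 0 with hs | rfl | hs
  · refine EReal.ge_of_forall_gt_iff_ge.mp fun r _ => ?_
    let d := max c ((φ x - r) / s)
    refine le_trans (EReal.coe_le_coe_iff.mpr ?_)
      (hle ⟨(φ, d), mem_affineMinorants_of_le hφ (le_max_left _ _)⟩)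
    have hd : d * s ≤ φ x - r := (div_le_iff_of_neg hs).mp (le_max_right _ _)
    exact le_sub_comm.mp hd
  · refine (perspective_zero_le_iff hproper.1).mpr fun y _ => ?_
    rw [← hf (y + x)]
    refine iSup_le fun q => ?_
    calc ((q.1.1 (y + x) - q.1.2 : ℝ) : EReal)
        = ((q.1.1 x - q.1.2 * 0 : ℝ) : EReal) + ((q.1.1 y - q.1.2 : ℝ) : EReal) := by
          rw [← EReal.coe_add, map_add]; congr 1; ring
      _ ≤ _ := add_le_add (hle q) (q.2 y)
  · have hs' : (0 : EReal) < s := by exact_mod_cast hs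
    rw [perspective_of_pos f x hs, mul_comm, ← EReal.le_div_iff_mul_le hs' (EReal.coe_ne_top s),
      ← hf]
    refine iSup_le fun q => (EReal.le_div_iff_mul_le hs' (EReal.coe_ne_top s)).mpr ?_
    refine le_of_eq_of_le ?_ (hle q)
    rw [← EReal.coe_mul, map_smul, smul_eq_mul, sub_mul, mul_assoc, mul_comm (q.1.1 x),
      inv_mul_cancel_left₀ hs.ne']

protected theorem EConvexOn.perspective {f : E → EReal} (hconv : EConvexOn f) (hproper : EProper f)
    (hlsc : LowerSemicontinuous f) : EConvexOn (perspective f) := by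
  rw [funext (perspective_eq_iSup hproper hconv hlsc)]
  exact .iSup fun q => econvexOn_coe <|
    (q.1.1.toLinearMap ∘ₗ .fst ℝ E ℝ - q.1.2 • .snd ℝ E ℝ).convexOn convex_univ

theorem lowerSemicontinuous_perspective {f : E → EReal} (hproper : EProper f)
    (hconv : EConvexOn f) (hlsc : LowerSemicontinuous f) :
    LowerSemicontinuous (perspective f) := by
  rw [funext (perspective_eq_iSup hproper hconv hlsc)]
  exact lowerSemicontinuous_iSup fun q =>
    (continuous_coe_real_ereal.comp (by fun_prop)).lowerSemicontinuous

theorem innerSL_mem_affineMinorants_iff {f : E → EReal} {μ : E} {c : ℝ} :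
    (innerSL ℝ μ, c) ∈ affineMinorants f ↔ fenchel f μ ≤ c := by
  rw [fenchel, iSup_le_iff]
  refine forall_congr' fun x => ?_
  rw [EReal.sub_le_iff_le_add (.inr (EReal.coe_ne_top c)) (.inr (EReal.coe_ne_bot c)),
    add_comm, ← EReal.sub_le_iff_le_add (.inl (EReal.coe_ne_bot c)) (.inl (EReal.coe_ne_top c)),
    ← EReal.coe_sub, innerSL_apply_apply]

theorem conjProd_perspective_of_fenchel_le {f : E → EReal} (hf : EProper f) {μ : E} {z : ℝ}
    (h : fenchel f μ ≤ (-z : ℝ)) : conjProd (perspective f) μ z = 0 := by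
  refine le_antisymm (iSup_le fun p => EReal.sub_nonpos.mpr ?_) ?_
  · simpa using
      le_perspective_of_mem_affineMinorants hf (innerSL_mem_affineMinorants_iff.mpr h) p
  · have h0 : perspective f (0, 0) ≤ 0 := (perspective_zero_le_iff hf.1).mpr (by simp)
    refine le_iSup_of_le (0, 0) ?_
    simpa using h0

theorem mul_le_conjProd_perspective {f : E → EReal} {x : E} {a : ℝ} (hx : f x = a) (μ : E)
    (z : ℝ) {t : ℝ} (ht : 0 < t) :
    ((t * (⟪μ, x⟫ + z - a) : ℝ) : EReal) ≤ conjProd (perspective f) μ z := by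
  refine le_iSup_of_le (t • x, t) (le_of_eq ?_)
  rw [perspective_of_pos f _ ht, inv_smul_smul₀ ht.ne', hx, ← EReal.coe_mul, ← EReal.coe_sub,
    real_inner_smul_right]
  congr 1
  ring

theorem conjProd_perspective_of_lt_fenchel {f : E → EReal} (hbot : ∀ x, f x ≠ ⊥) {μ : E} {z : ℝ}
    (h : (-z : ℝ) < fenchel f μ) : conjProd (perspective f) μ z = ⊤ := by
  obtain ⟨x, hx⟩ := lt_iSup_iff.mp h
  have hxt : f x ≠ ⊤ := by
    rintro hxt
    simp [hxt] at hx
  lift f x to ℝ using ⟨hxt, hbot x⟩ with a ha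
  have hgap : 0 < ⟪μ, x⟫ + z - a := by
    have : -z < ⟪μ, x⟫ - a := by exact_mod_cast hx
    linarith
  refine top_unique (EReal.ge_of_forall_gt_iff_ge.mp fun r _ => ?_)
  let t := (|r| + 1) / (⟪μ, x⟫ + z - a)
  refine le_trans (EReal.coe_le_coe_iff.mpr ?_)
    (mul_le_conjProd_perspective ha.symm μ z (t := t) (by positivity))
  rw [div_mul_cancel₀ _ hgap.ne']
  linarith [le_abs_self r]

theorem conjProd_perspective {f : E → EReal} (hf : EProper f) (μ : E) (z : ℝ) :
    conjProd (perspective f) μ z = if fenchel f μ ≤ ((-z : ℝ) : EReal) then 0 else ⊤ := by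
  split_ifs with h
  · exact conjProd_perspective_of_fenchel_le hf h
  · exact conjProd_perspective_of_lt_fenchel hf.1 (not_le.mp h)

theorem stmt8_general (f : E → EReal)
    (hproper : EProper f) (hconv : EConvexOn f) (hlsc : LowerSemicontinuous f) :
    EProper (perspective f) ∧ EConvexOn (perspective f) ∧
    LowerSemicontinuous (perspective f) ∧
    ∀ (μ : E) (z : ℝ), conjProd (perspective f) μ z =
      if fenchel f μ ≤ ((-z : ℝ) : EReal) then 0 else ⊤ :=
  ⟨hproper.perspective, hconv.perspective hproper hlsc,
    lowerSemicontinuous_perspective hproper hconv hlsc, conjProd_perspective hproper⟩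

/-- The perspective of a proper convex lsc function is proper convex lsc, and its conjugate
is the indicator of the epigraph of `f*` evaluated at `(μ, -z)`. -/
theorem stmt8 [CompleteSpace E] (f : E → EReal)
    (hproper : EProper f) (hconv : EConvexOn f) (hlsc : LowerSemicontinuous f) :
    EProper (perspective f) ∧ EConvexOn (perspective f) ∧
    LowerSemicontinuous (perspective f) ∧
    ∀ (μ : E) (z : ℝ), conjProd (perspective f) μ z =
      if fenchel f μ ≤ ((-z : ℝ) : EReal) then 0 else ⊤ := by
  exact stmt8_general f hproper hconv hlsc
end
end

section
/- Let E be a real Hilbert space and f : E → ℝ be convex and Fréchet differentiable. Then for all s > 0 and x ∈ E, the perspective function f̃ is Fréchet differentiable at (x, s) with gradient ∇f̃(x, s) = (∇f(x/s), f(x/s) − ⟨∇f(x/s), x/s⟩). Moreover, if ∇f is continuous at x/s, then ∇f̃ is continuous at (x, s). -/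
open scoped Classical
open scoped RealInnerProductSpace

noncomputable section

variable {E : Type*} [NormedAddCommGroup E] [InnerProductSpace ℝ E]

/-- The (real-valued) perspective function `g(x,s) = s f(x/s)` for `s > 0` (junk value `0`
for `s ≤ 0`, which does not affect local statements at `s > 0`). -/
def perspectiveR (f : E → ℝ) (p : E × ℝ) : ℝ :=
  if 0 < p.2 then p.2 * f (p.2⁻¹ • p.1) else 0

section NormedSpace

variable {𝕜 V F : Type*} [NontriviallyNormedField 𝕜] [NormedAddCommGroup V] [NormedSpace 𝕜 V]
  [NormedAddCommGroup F] [NormedSpace 𝕜 F]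

theorem hasFDerivAt_inv_snd_smul_fst (x : V) {s : 𝕜} (hs : s ≠ 0) :
    HasFDerivAt (fun p : V × 𝕜 => p.2⁻¹ • p.1)
      (s⁻¹ • (ContinuousLinearMap.fst 𝕜 V 𝕜 -
        (ContinuousLinearMap.snd 𝕜 V 𝕜).smulRight (s⁻¹ • x))) (x, s) := by
  have hinv : HasFDerivAt (fun p : V × 𝕜 => p.2⁻¹)
      (-(s ^ 2)⁻¹ • ContinuousLinearMap.snd 𝕜 V 𝕜) (x, s) :=
    (hasDerivAt_inv hs).comp_hasFDerivAt (x, s) hasFDerivAt_snd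
  refine (hinv.smul hasFDerivAt_fst).congr_fderiv (ContinuousLinearMap.ext fun ⟨h, t⟩ => ?_)
  change s⁻¹ • h + (-(s ^ 2)⁻¹ • t) • x = s⁻¹ • (h - t • s⁻¹ • x)
  module

/- Write `y = s⁻¹ • x`. In the direction `(h, t)` the argument `p.2⁻¹ • p.1` moves by
`s⁻¹ • (h - t • y)`, so the product rule gives `s • L (s⁻¹ • (h - t • y)) + t • f y`, in which
the factors `s` and `s⁻¹` cancel. -/
theorem hasFDerivAt_snd_smul_comp_inv_snd_smul_fst {f : V → F} {L : V →L[𝕜] F} {x : V} {s : 𝕜}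
    (hs : s ≠ 0) (hf : HasFDerivAt f L (s⁻¹ • x)) :
    HasFDerivAt (fun p : V × 𝕜 => p.2 • f (p.2⁻¹ • p.1))
      (L.comp (ContinuousLinearMap.fst 𝕜 V 𝕜) +
        (ContinuousLinearMap.snd 𝕜 V 𝕜).smulRight (f (s⁻¹ • x) - L (s⁻¹ • x))) (x, s) := by
  have hcomp := hf.comp (x, s) (hasFDerivAt_inv_snd_smul_fst x hs)
  have hprod := (hasFDerivAt_snd (𝕜 := 𝕜) (p := (x, s))).smul hcomp
  refine hprod.congr_fderiv (ContinuousLinearMap.ext fun ⟨h, t⟩ => ?_)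
  calc s • L (s⁻¹ • (h - t • s⁻¹ • x)) + t • f (s⁻¹ • x)
      = L (h - t • s⁻¹ • x) + t • f (s⁻¹ • x) := by rw [map_smul, smul_inv_smul₀ hs]
    _ = L h + t • (f (s⁻¹ • x) - L (s⁻¹ • x)) := by
      rw [map_sub, map_smul L t, smul_sub]
      abel

end NormedSpace

open scoped Topology

theorem perspectiveR_eventuallyEq (f : E → ℝ) (x : E) {s : ℝ} (hs : 0 < s) :
    perspectiveR f =ᶠ[𝓝 (x, s)] fun p => p.2 • f (p.2⁻¹ • p.1) := by
  filter_upwards [continuousAt_snd.eventually_const_lt hs] with p hp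
  exact if_pos hp

theorem hasFDerivAt_perspectiveR {f : E → ℝ} {L : E →L[ℝ] ℝ} {x : E} {s : ℝ} (hs : 0 < s)
    (hf : HasFDerivAt f L (s⁻¹ • x)) :
    HasFDerivAt (perspectiveR f)
      (L.comp (ContinuousLinearMap.fst ℝ E ℝ) +
        (f (s⁻¹ • x) - L (s⁻¹ • x)) • ContinuousLinearMap.snd ℝ E ℝ) (x, s) := by
  have hderiv := (hasFDerivAt_snd_smul_comp_inv_snd_smul_fst hs.ne' hf).congr_of_eventuallyEq
    (perspectiveR_eventuallyEq f x hs)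
  refine hderiv.congr_fderiv (ContinuousLinearMap.ext fun p => ?_)
  simp [mul_comm]

/- The gradient of the perspective is homogeneous of degree zero: it is the map
`y ↦ (f' y, f y - ⟪f' y, y⟫)` evaluated at `y = p.2⁻¹ • p.1`. -/
theorem continuousAt_perspective_gradient {f : E → ℝ} {f' : E → E} {x : E} {s : ℝ} (hs : s ≠ 0)
    (hf : ContinuousAt f (s⁻¹ • x)) (hf' : ContinuousAt f' (s⁻¹ • x)) :
    ContinuousAt (fun p : E × ℝ =>
      (f' (p.2⁻¹ • p.1), f (p.2⁻¹ • p.1) - ⟪f' (p.2⁻¹ • p.1), p.2⁻¹ • p.1⟫)) (x, s) := by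
  have hpair : ContinuousAt (fun y => (f' y, f y - ⟪f' y, y⟫)) (s⁻¹ • x) :=
    hf'.prodMk (hf.sub (hf'.inner (𝕜 := ℝ) continuousAt_id))
  exact hpair.comp (f := fun p : E × ℝ => p.2⁻¹ • p.1)
    (hasFDerivAt_inv_snd_smul_fst x hs).continuousAt

theorem stmt9_general {f : E → ℝ} {f' : E → E} {x : E} {s : ℝ} (hs : 0 < s)
    (hf : HasFDerivAt f (innerSL ℝ (f' (s⁻¹ • x))) (s⁻¹ • x)) :
    HasFDerivAt (perspectiveR f)
      ((innerSL ℝ (f' (s⁻¹ • x))).comp (ContinuousLinearMap.fst ℝ E ℝ) +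
        (f (s⁻¹ • x) - ⟪f' (s⁻¹ • x), s⁻¹ • x⟫) • ContinuousLinearMap.snd ℝ E ℝ)
      (x, s) ∧
    (ContinuousAt f' (s⁻¹ • x) →
      ContinuousAt (fun p : E × ℝ =>
        (f' (p.2⁻¹ • p.1), f (p.2⁻¹ • p.1) - ⟪f' (p.2⁻¹ • p.1), p.2⁻¹ • p.1⟫)) (x, s)) :=
  ⟨hasFDerivAt_perspectiveR hs hf, continuousAt_perspective_gradient hs.ne' hf.continuousAt⟩

/-- Differentiability of the perspective function: for convex Fréchet-differentiable `f`
and `s > 0`, `f̃` is Fréchet differentiable at `(x,s)` with gradient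
`(∇f(x/s), f(x/s) - ⟨∇f(x/s), x/s⟩)`; if `∇f` is continuous at `x/s` then the gradient map
of `f̃` is continuous at `(x,s)`. -/
theorem stmt9 [CompleteSpace E] (f : E → ℝ) (f' : E → E)
    (hconv : ConvexOn ℝ Set.univ f) (hdiff : ∀ y, HasGradientAt f (f' y) y) :
    ∀ (x : E) (s : ℝ), 0 < s →
      (HasFDerivAt (perspectiveR f)
        ((innerSL ℝ (f' (s⁻¹ • x))).comp (ContinuousLinearMap.fst ℝ E ℝ) +
          (f (s⁻¹ • x) - ⟪f' (s⁻¹ • x), s⁻¹ • x⟫) • ContinuousLinearMap.snd ℝ E ℝ)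
        (x, s)) ∧
      (ContinuousAt f' (s⁻¹ • x) →
        ContinuousAt (fun p : E × ℝ =>
          ((f' (p.2⁻¹ • p.1) : E),
            (f (p.2⁻¹ • p.1) - ⟪f' (p.2⁻¹ • p.1), p.2⁻¹ • p.1⟫ : ℝ))) (x, s)) := by
  exact fun x s hs => stmt9_general hs (hdiff (s⁻¹ • x)).hasFDerivAt
end
end

section
/- Let E be a real Hilbert space, β > 0, and let Ξ : E → ℝ ∪ {+∞} be proper, lower semicontinuous and β-strongly convex. Let Q ⊆ E be convex, let a ∈ dom ∂Ξ with w_a ∈ ∂Ξ(a), let b ∈ Q ∩ dom ∂Ξ with w_b ∈ ∂Ξ(b) and w_a − w_b ∈ N_Q(b) (the normal cone of Q at b), and let c ∈ Q ∩ dom Ξ. Then 0 ≤ B_Ξ(c, (b, w_b)) ≤ B_Ξ(c, (a, w_a)) − B_Ξ(b, (a, w_a)) ≤ B_Ξ(c, (a, w_a)) − (β/2)‖b − a‖². -/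
open scoped Classical
open scoped RealInnerProductSpace

noncomputable section

variable {E : Type*} [NormedAddCommGroup E] [InnerProductSpace ℝ E]

/-- The normal cone of a convex set `Q` at `b`. -/
def normalCone (Q : Set E) (b : E) : Set E := {ν : E | ∀ x ∈ Q, ⟪ν, x - b⟫ ≤ 0}

/-!
Bregman distances with the same first argument satisfy the three-point identity
`B(c, (a, w_a)) - B(b, (a, w_a)) = B(c, (b, w_b)) + ⟪c - b, w_b - w_a⟫`, and the last inner product
is nonnegative exactly because `w_a - w_b` is normal to `Q` at `b`. Strong convexity enters only
through `β/2 ‖b - a‖² ≤ B(b, (a, w_a))`: comparing the affine minorant at `a` with the strong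
convexity bound at `(1 - t) a + t b` and dividing by `t` gives this up to a factor `1 - t`, and
`t → 0` removes the factor.
-/

open Filter Topology

section RealConvexity

variable {V : Type*} [NormedAddCommGroup V] [NormedSpace ℝ V]
  {s : Set V} {φ : ℝ → ℝ} {f : V → ℝ} {x y : V}

theorem one_sub_mul_modulus_le_of_uniformConvexOn (hf : UniformConvexOn s φ f) (hx : x ∈ s)
    (hy : y ∈ s) {ℓ : V →ₗ[ℝ] ℝ} (hℓ : ∀ z ∈ s, f x + ℓ (z - x) ≤ f z)
    {t : ℝ} (ht₀ : 0 < t) (ht₁ : t < 1) :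
    (1 - t) * φ ‖x - y‖ ≤ f y - f x - ℓ (y - x) := by
  have hs₀ : 0 ≤ 1 - t := sub_nonneg.2 ht₁.le
  have hst : 1 - t + t = 1 := sub_add_cancel 1 t
  have lower : f x + t * ℓ (y - x) ≤ f ((1 - t) • x + t • y) := by
    have hz : (1 - t) • x + t • y - x = t • (y - x) := by module
    simpa only [hz, map_smul, smul_eq_mul] using hℓ _ (hf.1 hx hy hs₀ ht₀.le hst)
  have upper : f ((1 - t) • x + t • y)
      ≤ (1 - t) * f x + t * f y - (1 - t) * t * φ ‖x - y‖ :=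
    hf.2 hx hy hs₀ ht₀.le hst
  refine le_of_mul_le_mul_left ?_ ht₀
  linarith

theorem modulus_le_of_uniformConvexOn (hf : UniformConvexOn s φ f) (hx : x ∈ s) (hy : y ∈ s)
    {ℓ : V →ₗ[ℝ] ℝ} (hℓ : ∀ z ∈ s, f x + ℓ (z - x) ≤ f z) :
    φ ‖x - y‖ ≤ f y - f x - ℓ (y - x) := by
  have hlim : Tendsto (fun t : ℝ => (1 - t) * φ ‖x - y‖) (𝓝[>] 0) (𝓝 (φ ‖x - y‖)) := by
    have hcont : Continuous fun t : ℝ => (1 - t) * φ ‖x - y‖ := by fun_prop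
    simpa only [sub_zero, one_mul] using (hcont.tendsto 0).mono_left nhdsWithin_le_nhds
  refine le_of_tendsto hlim ?_
  filter_upwards [Ioo_mem_nhdsGT zero_lt_one] with t ht
  exact one_sub_mul_modulus_le_of_uniformConvexOn hf hx hy hℓ ht.1 ht.2

end RealConvexity

/-- The effective domain `dom f` of a function with values in `ℝ ∪ {+∞}`, the set on
which `f` is studied as a real-valued function. It is defined by `f x ≠ ⊤` alone, so `f` is finite
on it only when `f` never takes the value `⊥`. -/
def effectiveDomain {V : Type*} (f : V → EReal) : Set V := {x | f x ≠ ⊤}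

theorem EConvexOn.convexOn_toReal {V : Type*} [AddCommMonoid V] [Module ℝ V] {f : V → EReal}
    (hf : EConvexOn f) (hbot : ∀ x, f x ≠ ⊥) :
    ConvexOn ℝ (effectiveDomain f) fun x => (f x).toReal := by
  have bound {x y : V} (hx : x ∈ effectiveDomain f) (hy : y ∈ effectiveDomain f) {s t : ℝ}
      (hs : 0 < s) (ht : 0 < t) (hst : s + t = 1) :
      f (s • x + t • y) ≤ ((s * (f x).toReal + t * (f y).toReal : ℝ) : EReal) := by
    have h := hf x y s t hs ht hst
    rwa [← EReal.coe_toReal hx (hbot x), ← EReal.coe_toReal hy (hbot y), ← EReal.coe_mul,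
      ← EReal.coe_mul, ← EReal.coe_add] at h
  refine convexOn_iff_forall_pos.2 ⟨convex_iff_forall_pos.2 ?_, ?_⟩
  · intro x hx y hy s t hs ht hst
    exact ne_top_of_le_ne_top (EReal.coe_ne_top _) (bound hx hy hs ht hst)
  · intro x hx y hy s t hs ht hst
    exact EReal.toReal_le_toReal (bound hx hy hs ht hst) (hbot _) (EReal.coe_ne_top _)

theorem effectiveDomain_sub_coe {V : Type*} (f : V → EReal) (q : V → ℝ) :
    effectiveDomain (fun x => f x - q x) = effectiveDomain f :=
  Set.ext fun x => EReal.add_ne_top_iff_of_ne_bot_of_ne_top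
    (EReal.coe_ne_bot (-q x)) (EReal.coe_ne_top (-q x))

theorem StronglyConvexE.strongConvexOn_toReal {β : ℝ} {f : E → EReal}
    (hf : StronglyConvexE β f) (hbot : ∀ x, f x ≠ ⊥) :
    StrongConvexOn (effectiveDomain f) β fun x => (f x).toReal := by
  have hconv := EConvexOn.convexOn_toReal hf fun x =>
    EReal.add_ne_bot_iff.2 ⟨hbot x, EReal.coe_ne_bot (-(β / 2 * ‖x‖ ^ 2))⟩
  rw [effectiveDomain_sub_coe] at hconv
  refine strongConvexOn_iff_convex.2 (hconv.congr fun x hx => ?_)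
  exact EReal.toReal_sub hx (hbot x) (EReal.coe_ne_top _) (EReal.coe_ne_bot _)

section Bregman

variable {β : ℝ} {f : E → EReal} {x y z v w : E}

theorem ESubgradAt.mem_effectiveDomain (h : ESubgradAt f x w) (hf : EProper f) :
    x ∈ effectiveDomain f := by
  obtain ⟨y, hy⟩ := hf.2
  intro hx
  have := h y
  rw [hx, EReal.top_add_coe, top_le_iff] at this
  exact hy this

theorem ESubgradAt.toReal_add_inner_le (h : ESubgradAt f x w) (hf : EProper f)
    (hy : y ∈ effectiveDomain f) :
    (f x).toReal + ⟪w, y - x⟫ ≤ (f y).toReal := by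
  have := h y
  rw [← EReal.coe_toReal (h.mem_effectiveDomain hf) (hf.1 x), ← EReal.coe_toReal hy (hf.1 y)]
    at this
  exact_mod_cast this

theorem bregman_eq_coe (hf : EProper f) (h : ESubgradAt f x w) (hy : y ∈ effectiveDomain f) :
    bregman f y x w = (((f y).toReal - (f x).toReal - ⟪y - x, w⟫ : ℝ) : EReal) := by
  rw [bregman, if_pos h, EReal.coe_sub, EReal.coe_sub, EReal.coe_toReal hy (hf.1 y),
    EReal.coe_toReal (h.mem_effectiveDomain hf) (hf.1 x)]

theorem bregman_eq_top_of_notMem (hf : EProper f) (hy : y ∉ effectiveDomain f) :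
    bregman f y x w = ⊤ := by
  by_cases h : ESubgradAt f x w
  · rw [bregman, if_pos h, not_not.1 hy,
      ← EReal.coe_toReal (h.mem_effectiveDomain hf) (hf.1 x), EReal.top_sub_coe, EReal.top_sub_coe]
  · exact if_neg h

theorem coe_le_bregman (hf : EProper f) {r : ℝ}
    (hr : ESubgradAt f x w → y ∈ effectiveDomain f →
      r ≤ (f y).toReal - (f x).toReal - ⟪y - x, w⟫) :
    (r : EReal) ≤ bregman f y x w := by
  by_cases h : ESubgradAt f x w
  · by_cases hy : y ∈ effectiveDomain f
    · rw [bregman_eq_coe hf h hy]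
      exact EReal.coe_le_coe (hr h hy)
    · exact le_top.trans_eq (bregman_eq_top_of_notMem hf hy).symm
  · exact le_top.trans_eq (if_neg h).symm

theorem bregman_nonneg (hf : EProper f) : 0 ≤ bregman f y x w := by
  refine coe_le_bregman hf fun h hy => ?_
  have := h.toReal_add_inner_le hf hy
  rw [real_inner_comm]
  linarith

theorem StronglyConvexE.le_bregman (hsc : StronglyConvexE β f) (hf : EProper f) :
    ((β / 2 * ‖y - x‖ ^ 2 : ℝ) : EReal) ≤ bregman f y x w := by
  refine coe_le_bregman hf fun h hy => ?_
  rw [norm_sub_rev, real_inner_comm]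
  exact modulus_le_of_uniformConvexOn (hsc.strongConvexOn_toReal hf.1)
    (h.mem_effectiveDomain hf) hy (ℓ := innerₛₗ ℝ w) fun z hz => h.toReal_add_inner_le hf hz

theorem bregman_sub_bregman (hf : EProper f) (hx : ESubgradAt f x v) (hy : ESubgradAt f y w) :
    bregman f z x v - bregman f y x v = bregman f z y w + ((⟪z - y, w - v⟫ : ℝ) : EReal) := by
  rw [bregman_eq_coe hf hx (hy.mem_effectiveDomain hf)]
  by_cases hz : z ∈ effectiveDomain f
  · rw [bregman_eq_coe hf hx hz, bregman_eq_coe hf hy hz]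
    norm_cast
    simp only [inner_sub_left, inner_sub_right]
    ring
  · rw [bregman_eq_top_of_notMem hf hz, bregman_eq_top_of_notMem hf hz, EReal.top_sub_coe,
      EReal.top_add_coe]

theorem bregman_le_bregman_sub_bregman (hf : EProper f) (hx : ESubgradAt f x v)
    (hy : ESubgradAt f y w) {Q : Set E} (hnc : v - w ∈ normalCone Q y) (hz : z ∈ Q) :
    bregman f z y w ≤ bregman f z x v - bregman f y x v := by
  have hinner : 0 ≤ ⟪z - y, w - v⟫ := by
    rw [real_inner_comm, ← neg_sub v w, inner_neg_left]
    exact neg_nonneg.2 (hnc z hz)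
  rw [bregman_sub_bregman hf hx hy]
  exact le_add_of_nonneg_right (EReal.coe_nonneg.2 hinner)

end Bregman

theorem stmt11_general (β : ℝ) (Ξ : E → EReal) (hproper : EProper Ξ) (hsc : StronglyConvexE β Ξ)
    (Q : Set E) (a b c wa wb : E)
    (hwa : ESubgradAt Ξ a wa) (hwb : ESubgradAt Ξ b wb) (hnc : wa - wb ∈ normalCone Q b)
    (hcQ : c ∈ Q) :
    0 ≤ bregman Ξ c b wb ∧
    bregman Ξ c b wb ≤ bregman Ξ c a wa - bregman Ξ b a wa ∧
    bregman Ξ c a wa - bregman Ξ b a wa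
      ≤ bregman Ξ c a wa - ((β / 2 * ‖b - a‖ ^ 2 : ℝ) : EReal) :=
  ⟨bregman_nonneg hproper, bregman_le_bregman_sub_bregman hproper hwa hwb hnc hcQ,
    EReal.sub_le_sub le_rfl (hsc.le_bregman hproper)⟩

/-- Key Bregman projection inequality: if `w_a ∈ ∂Ξ(a)`, `b ∈ Q` with `w_b ∈ ∂Ξ(b)` and
`w_a - w_b ∈ N_Q(b)`, then for every `c ∈ Q ∩ dom Ξ`,
`0 ≤ B_Ξ(c,(b,w_b)) ≤ B_Ξ(c,(a,w_a)) - B_Ξ(b,(a,w_a)) ≤ B_Ξ(c,(a,w_a)) - (β/2)‖b - a‖²`. -/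
theorem stmt11 [CompleteSpace E] (β : ℝ) (hβ : 0 < β) (Ξ : E → EReal)
    (hproper : EProper Ξ) (hlsc : LowerSemicontinuous Ξ) (hsc : StronglyConvexE β Ξ)
    (Q : Set E) (hQ : Convex ℝ Q)
    (a b c wa wb : E)
    (hwa : ESubgradAt Ξ a wa)
    (hbQ : b ∈ Q) (hwb : ESubgradAt Ξ b wb) (hnc : wa - wb ∈ normalCone Q b)
    (hcQ : c ∈ Q) (hcdom : Ξ c ≠ ⊤) :
    0 ≤ bregman Ξ c b wb ∧
    bregman Ξ c b wb ≤ bregman Ξ c a wa - bregman Ξ b a wa ∧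
    bregman Ξ c a wa - bregman Ξ b a wa
      ≤ bregman Ξ c a wa - ((β / 2 * ‖b - a‖ ^ 2 : ℝ) : EReal) :=
  stmt11_general β Ξ hproper hsc Q a b c wa wb hwa hwb hnc hcQ
end
end

section
/- Let (Δ^t)_{t ∈ ℕ} be a nonnegative nonincreasing real sequence, λ ∈ (0, 1), and C̄ > 0. Assume that for all natural numbers t₁ ≤ t₂ such that Δ^t ≥ (1 − λ)·Δ^{t₁} for every t ∈ [t₁, t₂], one has (t₂ − t₁ + 1)·((1 − λ)·Δ^{t₂})² ≤ C̄. Then for every T ∈ ℕ, (T + 1)·(Δ^T)² ≤ (C̄/(1 − λ)²)·(1 + 1/(λ(2 − λ))). In particular, Δ^T = O(1/√T). -/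
/-! Fix `T` and let `[s, T]` be the longest interval ending at `T` for which the block bound holds;
it accounts for `T - s + 1` steps. If `0 < s`, then `[s - 1, T]` is not a block, so
`Δ T < (1 - λ) Δ (s - 1)` and the squared gap at `T` is smaller than the one at `s - 1` by the
factor `r = (1 - λ) ^ 2`. If `B` bounds `(t + 1) ((1 - λ) Δ t) ^ 2` for `t < T`, then `C̄ + r B`
bounds it at `T`, and `B = C̄ / (1 - r)` is the fixed point of this recursion. Choosing the blocks
anew for each `T`, instead of greedily from `0`, gives the constant `1 / (λ (2 - λ))` in place of
`1 + 1 / (λ (2 - λ))`. -/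

section LinearOrderedField

variable {𝕜 : Type*} [Field 𝕜] [LinearOrder 𝕜] [IsStrictOrderedRing 𝕜]

theorem exists_maximal_block {g : ℕ → 𝕜} {r K : 𝕜} (hr : r < 1) (hK : 0 ≤ K)
    (h : ∀ s t, s ≤ t → g t ≤ r * g s ∨ ((t : 𝕜) - s + 1) * g t ≤ K) (t : ℕ) :
    ∃ s ≤ t, ((t : 𝕜) - s + 1) * g t ≤ K ∧ ∀ k, s = k + 1 → g t ≤ r * g k := by
  classical
  have singleton_block : ((t : 𝕜) - t + 1) * g t ≤ K := by
    refine (h t t le_rfl).elim (fun hdecay ↦ ?_) id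
    have : g t ≤ 0 := by
      by_contra! hpos
      exact (mul_lt_of_lt_one_left hpos hr).not_ge hdecay
    simpa using this.trans hK
  have hex : ∃ s : ℕ, ((t : 𝕜) - s + 1) * g t ≤ K := ⟨t, singleton_block⟩
  have hle : Nat.find hex ≤ t := Nat.find_min' hex singleton_block
  refine ⟨Nat.find hex, hle, Nat.find_spec hex, fun k hk ↦ ?_⟩
  exact (h k t (by lia)).resolve_right (Nat.find_min hex (by lia))

theorem succ_mul_le_div_one_sub_of_decay_or_block {g : ℕ → 𝕜} {r K : 𝕜}
    (hr₀ : 0 ≤ r) (hr₁ : r < 1) (hK : 0 ≤ K)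
    (h : ∀ s t, s ≤ t → g t ≤ r * g s ∨ ((t : 𝕜) - s + 1) * g t ≤ K) (T : ℕ) :
    ((T : 𝕜) + 1) * g T ≤ K / (1 - r) := by
  have hr : 0 < 1 - r := sub_pos.2 hr₁
  induction T using Nat.strong_induction_on with
  | _ T ih =>
    obtain ⟨s, hsT, hblock, hdecay⟩ := exists_maximal_block hr₁ hK h T
    have before_block : (s : 𝕜) * g T ≤ r * (K / (1 - r)) := by
      cases s with
      | zero => simpa using mul_nonneg hr₀ (div_nonneg hK hr.le)
      | succ k =>
        calc ((k + 1 : ℕ) : 𝕜) * g T ≤ ((k + 1 : ℕ) : 𝕜) * (r * g k) := by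
              gcongr
              exact hdecay k rfl
          _ = r * (((k : 𝕜) + 1) * g k) := by push_cast; ring
          _ ≤ r * (K / (1 - r)) := by
              gcongr
              exact ih k hsT
    calc ((T : 𝕜) + 1) * g T = ((T : 𝕜) - s + 1) * g T + s * g T := by ring
      _ ≤ K + r * (K / (1 - r)) := add_le_add hblock before_block
      _ = K / (1 - r) := by field_simp; ring

theorem stmt12_general {Δ : ℕ → 𝕜} (hnn : ∀ t, 0 ≤ Δ t) (hanti : Antitone Δ)
    {lam : 𝕜} (hlam : lam ∈ Set.Ioo 0 2) {Cbar : 𝕜}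
    (hblock : ∀ t₁ t₂ : ℕ, t₁ ≤ t₂ →
      (∀ t : ℕ, t₁ ≤ t → t ≤ t₂ → (1 - lam) * Δ t₁ ≤ Δ t) →
      ((t₂ : 𝕜) - (t₁ : 𝕜) + 1) * ((1 - lam) * Δ t₂) ^ 2 ≤ Cbar) (T : ℕ) :
    ((T : 𝕜) + 1) * ((1 - lam) * Δ T) ^ 2 ≤ Cbar / (lam * (2 - lam)) := by
  obtain ⟨hlam₀, hlam₂⟩ := hlam
  have one_sub_ratio : 1 - (1 - lam) ^ 2 = lam * (2 - lam) := by ring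
  have ratio_lt_one : (1 - lam) ^ 2 < 1 := by
    rw [← sub_pos, one_sub_ratio]
    exact mul_pos hlam₀ (sub_pos.2 hlam₂)
  have block_bound {s t : ℕ} (hst : s ≤ t) (h : (1 - lam) * Δ s ≤ Δ t) :
      ((t : 𝕜) - s + 1) * ((1 - lam) * Δ t) ^ 2 ≤ Cbar :=
    hblock s t hst fun _ _ hut ↦ h.trans (hanti hut)
  have decay {s t : ℕ} (h : Δ t ≤ (1 - lam) * Δ s) :
      ((1 - lam) * Δ t) ^ 2 ≤ (1 - lam) ^ 2 * ((1 - lam) * Δ s) ^ 2 := by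
    rw [mul_pow (1 - lam) (Δ t)]
    gcongr
    exact hnn t
  have Cbar_nonneg : 0 ≤ Cbar := by
    have h₀ : (1 - lam) * Δ 0 ≤ Δ 0 := mul_le_of_le_one_left (hnn 0) (by linarith)
    exact (sq_nonneg _).trans (by simpa using block_bound le_rfl h₀)
  rw [← one_sub_ratio]
  exact succ_mul_le_div_one_sub_of_decay_or_block (g := fun t ↦ ((1 - lam) * Δ t) ^ 2)
    (sq_nonneg _) ratio_lt_one Cbar_nonneg
    (fun s t hst ↦ (le_total (Δ t) _).imp decay (block_bound hst)) T

end LinearOrderedField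

/-- Abstract counting argument for the `O(1/√t)` rate of the Extended Level-Set method.
If `Δ` is nonnegative and nonincreasing, `λ ∈ (0,1)`, and every block `[t₁,t₂]` on which
`Δ^t ≥ (1-λ)Δ^{t₁}` satisfies `(t₂ - t₁ + 1)((1-λ)Δ^{t₂})² ≤ C̄`, then
`(T+1)(Δ^T)² ≤ (C̄/(1-λ)²)(1 + 1/(λ(2-λ)))` for every `T`. -/
theorem stmt12 (Δ : ℕ → ℝ) (hnn : ∀ t, 0 ≤ Δ t) (hanti : Antitone Δ)
    (lam : ℝ) (hlam : lam ∈ Set.Ioo (0 : ℝ) 1) (Cbar : ℝ) (hC : 0 < Cbar)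
    (hblock : ∀ t₁ t₂ : ℕ, t₁ ≤ t₂ →
      (∀ t : ℕ, t₁ ≤ t → t ≤ t₂ → (1 - lam) * Δ t₁ ≤ Δ t) →
      ((t₂ : ℝ) - (t₁ : ℝ) + 1) * ((1 - lam) * Δ t₂) ^ 2 ≤ Cbar) :
    ∀ T : ℕ, ((T : ℝ) + 1) * (Δ T) ^ 2
      ≤ (Cbar / (1 - lam) ^ 2) * (1 + 1 / (lam * (2 - lam))) := by
  intro T
  have hq : 0 < 1 - lam := sub_pos.2 hlam.2
  calc ((T : ℝ) + 1) * Δ T ^ 2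
      = ((T : ℝ) + 1) * ((1 - lam) * Δ T) ^ 2 / (1 - lam) ^ 2 := by field_simp
    _ ≤ Cbar / (lam * (2 - lam)) / (1 - lam) ^ 2 := by
        gcongr
        exact stmt12_general hnn hanti (Set.Ioo_subset_Ioo_right one_le_two hlam) hblock T
    _ = Cbar / (1 - lam) ^ 2 * (1 / (lam * (2 - lam))) := by ring
    _ ≤ Cbar / (1 - lam) ^ 2 * (1 + 1 / (lam * (2 - lam))) := by
        gcongr
        exact le_add_of_nonneg_left zero_le_one
end

section
/- (Convergence of the Extended Level-Set method.) Let E be a real Hilbert space, ψ : E → ℝ ∪ {+∞} proper convex lower semicontinuous, E ⊆ E a nonempty closed convex set, Ξ : E → ℝ ∪ {+∞} proper lower semicontinuous and β-strongly convex for some β > 0, and λ ∈ (0,1). Let sequences (μ^t), (w^t), (v^t) in E, sets E^t ⊆ E, and reals h̄^t, h̲^t, Δ^t, ℓ^t be generated as follows: μ⁰ ∈ dom σ_E ∩ dom ∂Ξ ∩ dom ψ, w⁰ ∈ ∂Ξ(μ⁰), E^{−1} ⊆ E bounded with ψ + σ_{E^{−1}} coercive, h̄^{−1} = +∞; at each iteration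 t: v^t ∈ ∂σ_E(μ^t); h̄^t = min(h̄^{t−1}, ψ(μ^t) + σ_E(μ^t)); h̲^t = inf_{μ ∈ E} (ψ(μ) + σ_{E^{t−1} ∪ {v^t}}(μ)); E^t = E^{t−1} ∪ {v^t}; Δ^t = h̄^t − h̲^t; ℓ^t = λh̄^t + (1−λ)h̲^t; Q^t = {μ | ψ(μ) + σ_{E^t}(μ) ≤ ℓ^t}; μ^{t+1} is the minimizer of μ ↦ B_Ξ(μ, (μ^t, w^t)) over Q^t; and w^{t+1} ∈ ∂Ξ(μ^{t+1}) with w^t − w^{t+1} ∈ N_{Q^t}(μ^{t+1}). Assume: (H2) ∂σ_E(μ^t) ≠ ∅ for all t and ‖v^t‖ ≤ C_oracle for a constant C_oracle; (H4) the set Q^{−1} = {μ | ψ(μ) + σ_{E^{−1}}(μ) ≤ h̄⁰} is contained in dom Ξ and Ξ is bounded on Q^{−1}; (H5) such w^{t+1} exists at every iteration and ‖w^t‖ ≤ C_{∂Ξ} for a constant C_{∂Ξ}; (H6) |ψ(μ^{t+1}) − ψ(μ^t)| ≤ C_ψ ‖μ^{t+1} − μ^t‖ for a constant C_ψ. Then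 there exists C > 0 such that for all t ≥ 1, Δ^t ≤ C/√t. -/
open scoped Classical
open scoped RealInnerProductSpace

noncomputable section

variable {E : Type*} [NormedAddCommGroup E] [InnerProductSpace ℝ E]

/-- The level set `Q^t = {μ | ψ(μ) + σ_{E^t}(μ) ≤ ℓ^t}` with
`ℓ^t = λ h̄^t + (1-λ) h̲^t`. -/
def levelSet (ψ : E → EReal) (ESet : ℕ → Set E) (lam : ℝ)
    (hbar hlow : ℕ → EReal) (t : ℕ) : Set E :=
  {ν : E | ψ ν + supportFn (ESet t) ν
    ≤ (lam : EReal) * hbar t + ((1 - lam : ℝ) : EReal) * hlow t}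

/-!
Let `Δ t = h̄ t - h̲ t` and `q = 1 - λ`. Feasibility of `μ (t + 1)` for a model that contains the
cut `v t` forces a step of length at least a constant multiple of `q Δ t`.

As long as the gap has not shrunk below `q Δ s`, all level sets `Q s, …, Q t` share a point `u`.
Strong convexity and the normal cone condition then make the Bregman distance from `u` to the
iterates drop by a constant multiple of `(Δ t)²` at each step from `s` to `t`, so
`(t - s + 1) (Δ t)²` is bounded. Between such blocks the gap contracts by the factor `q`, and
summing the resulting geometric series bounds `(t + 1) (Δ t)²`.
-/

section Sequences

lemma sub_mul_add_le_of_succ_add_le {B : ℕ → ℝ} {δ : ℝ} {s t : ℕ} (hst : s ≤ t)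
    (hB : ∀ r, s ≤ r → r < t → B (r + 1) + δ ≤ B r) : ((t : ℝ) - s) * δ + B t ≤ B s := by
  induction t, hst using Nat.le_induction with
  | base => simp
  | succ t hst ih =>
    have hprev := ih fun r hsr hrt => hB r hsr (hrt.trans t.lt_succ_self)
    have hlast := hB t hst t.lt_succ_self
    push_cast
    linarith

lemma add_one_mul_sq_le_of_blocks {Δ : ℕ → ℝ} {q K : ℝ} (hq₀ : 0 ≤ q) (hq₁ : q < 1) (hK : 0 ≤ K)
    (hΔ : ∀ t, 0 ≤ Δ t)
    (hblock : ∀ s t, s ≤ t → q * Δ s < Δ t → ((t : ℝ) - s + 1) * Δ t ^ 2 ≤ K) (t : ℕ) :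
    ((t : ℝ) + 1) * Δ t ^ 2 ≤ K / (1 - q ^ 2) := by
  have hq : 0 < 1 - q ^ 2 := by nlinarith
  set M := K / (1 - q ^ 2) with hM
  have hM₀ : 0 ≤ M := div_nonneg hK hq.le
  have hM_fix : K + q ^ 2 * M = M := by rw [hM]; field_simp; ring
  induction t using Nat.strong_induction_on with
  | _ t ih =>
    rcases (hΔ t).eq_or_lt with hzero | hpos
    · simpa [← hzero] using hM₀
    have hblock_start : ∃ s, s ≤ t ∧ q * Δ s < Δ t := ⟨t, le_rfl, by nlinarith⟩
    obtain ⟨hst, hs⟩ := Nat.find_spec hblock_start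
    have hmin := fun r => Nat.find_min (H := hblock_start) (m := r)
    generalize Nat.find hblock_start = s at hst hs hmin
    have hK_block := hblock s t hst hs
    cases s with
    | zero =>
      push_cast at hK_block
      linarith [mul_nonneg (sq_nonneg q) hM₀]
    | succ r =>
      have hcontract : Δ t ≤ q * Δ r := by
        by_contra hlt
        exact hmin r r.lt_succ_self ⟨(Nat.lt_of_succ_le hst).le, not_le.mp hlt⟩
      have hprev : ((r : ℝ) + 1) * Δ t ^ 2 ≤ q ^ 2 * M := calc
        ((r : ℝ) + 1) * Δ t ^ 2 ≤ ((r : ℝ) + 1) * (q * Δ r) ^ 2 := by gcongr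
        _ = q ^ 2 * (((r : ℝ) + 1) * Δ r ^ 2) := by ring
        _ ≤ q ^ 2 * M := by gcongr; exact ih r hst
      push_cast at hK_block
      linarith

lemma exists_le_div_sqrt_of_add_one_mul_sq_le {Δ : ℕ → ℝ} {M : ℝ}
    (h : ∀ t : ℕ, ((t : ℝ) + 1) * Δ t ^ 2 ≤ M) :
    ∃ C : ℝ, 0 < C ∧ ∀ t : ℕ, 1 ≤ t → Δ t ≤ C / √t := by
  have hM : 0 ≤ M := (by positivity : (0 : ℝ) ≤ ((0 : ℕ) + 1) * Δ 0 ^ 2).trans (h 0)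
  refine ⟨√(M + 1), by positivity, fun t ht => ?_⟩
  have ht₀ : (0 : ℝ) < t := by exact_mod_cast ht
  rw [le_div_iff₀ (Real.sqrt_pos.mpr ht₀)]
  apply Real.le_sqrt_of_sq_le
  rw [mul_pow, Real.sq_sqrt ht₀.le]
  linarith [h t, sq_nonneg (Δ t)]

end Sequences

section SupportFunction

variable {A B : Set E}

lemma inner_le_supportFn {x : E} (hx : x ∈ A) (ν : E) : ((⟪ν, x⟫ : ℝ) : EReal) ≤ supportFn A ν :=
  le_iSup (fun y : A => ((⟪ν, (y : E)⟫ : ℝ) : EReal)) ⟨x, hx⟩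

lemma supportFn_le_iff {ν : E} {c : EReal} :
    supportFn A ν ≤ c ↔ ∀ x ∈ A, ((⟪ν, x⟫ : ℝ) : EReal) ≤ c := by
  simp only [supportFn, iSup_le_iff, Subtype.forall]

lemma supportFn_mono (hAB : A ⊆ B) (ν : E) : supportFn A ν ≤ supportFn B ν :=
  supportFn_le_iff.mpr fun _ hx => inner_le_supportFn (hAB hx) ν

lemma supportFn_ne_bot (hA : A.Nonempty) (ν : E) : supportFn A ν ≠ ⊥ :=
  let ⟨_, hx⟩ := hA
  ne_bot_of_le_ne_bot (EReal.coe_ne_bot _) (inner_le_supportFn hx ν)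

lemma supportFn_zero_le : supportFn A 0 ≤ 0 :=
  supportFn_le_iff.mpr fun x _ => by simp

lemma supportFn_add_le (m ν : E) : supportFn A (m + ν) ≤ supportFn A m + supportFn A ν :=
  supportFn_le_iff.mpr fun x hx => by
    rw [inner_add_left, EReal.coe_add]
    exact add_le_add (inner_le_supportFn hx m) (inner_le_supportFn hx ν)

end SupportFunction

namespace ESubgradAt

section SupportFunction

variable {A : Set E} {m v : E}

lemma supportFn_ne_top (hv : ESubgradAt (supportFn A) m v) : supportFn A m ≠ ⊤ := fun htop => by
  have h := (hv 0).trans supportFn_zero_le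
  rw [htop, EReal.top_add_coe] at h
  exact absurd h (by simp)

lemma inner_le_supportFn (hA : A.Nonempty) (hv : ESubgradAt (supportFn A) m v) (ν : E) :
    ((⟪ν, v⟫ : ℝ) : EReal) ≤ supportFn A ν := by
  have h : supportFn A m + ((⟪v, ν⟫ : ℝ) : EReal) ≤ supportFn A m + supportFn A ν := by
    simpa using (hv (m + ν)).trans (supportFn_add_le m ν)
  lift supportFn A m to ℝ using ⟨hv.supportFn_ne_top, supportFn_ne_bot hA m⟩ with a
  rw [real_inner_comm]
  exact (EReal.addLECancellable_coe a).add_le_add_iff_left.mp h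

lemma supportFn_eq_inner (hA : A.Nonempty) (hv : ESubgradAt (supportFn A) m v) :
    supportFn A m = ((⟪m, v⟫ : ℝ) : EReal) := by
  refine le_antisymm ?_ (hv.inner_le_supportFn hA m)
  have h := (hv 0).trans supportFn_zero_le
  lift supportFn A m to ℝ using ⟨hv.supportFn_ne_top, supportFn_ne_bot hA m⟩ with a
  norm_cast at h ⊢
  rw [zero_sub, inner_neg_right, real_inner_comm] at h
  linarith

end SupportFunction

variable {Ξ : E → EReal} {β : ℝ} {x y w : E}

lemma ne_top (hw : ESubgradAt Ξ x w) (hy : Ξ y ≠ ⊤) : Ξ x ≠ ⊤ := fun hx =>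
  hy <| top_le_iff.mp <| by simpa [hx] using hw y

lemma ne_bot (hw : ESubgradAt Ξ x w) (hx : Ξ x ≠ ⊥) : Ξ y ≠ ⊥ :=
  ne_bot_of_le_ne_bot (EReal.add_ne_bot_iff.mpr ⟨hx, EReal.coe_ne_bot _⟩) (hw y)

lemma one_sub_mul_sq_le {a b s : ℝ} (hΞ : StronglyConvexE β Ξ) (hw : ESubgradAt Ξ x w)
    (hx : Ξ x = a) (hy : Ξ y = b) (hs : s ∈ Set.Ioo (0 : ℝ) 1) :
    (1 - s) * (β / 2 * ‖y - x‖ ^ 2) ≤ b - a - ⟪w, y - x⟫ := by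
  set z := (1 - s) • x + s • y with hz
  have hz_sub : z - x = s • (y - x) := by rw [hz]; module
  have hz_sq : ‖z‖ ^ 2 = (1 - s) * ‖x‖ ^ 2 + s * ‖y‖ ^ 2 - s * (1 - s) * ‖y - x‖ ^ 2 := by
    rw [hz, norm_add_sq_real, norm_sub_sq_real, norm_smul, norm_smul, real_inner_smul_left,
      inner_smul_right, mul_pow, mul_pow, Real.norm_eq_abs, Real.norm_eq_abs, sq_abs, sq_abs,
      real_inner_comm]
    ring
  have hchain := (EReal.sub_le_sub (hw z) le_rfl).trans
    (hΞ x y (1 - s) s (sub_pos.mpr hs.2) hs.1 (sub_add_cancel 1 s))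
  simp only [hx, hy] at hchain
  norm_cast at hchain
  rw [hz_sub, inner_smul_right, hz_sq] at hchain
  refine le_of_mul_le_mul_left ?_ hs.1
  linarith

lemma add_sq_le (hΞ : StronglyConvexE β Ξ) (hw : ESubgradAt Ξ x w) (y : E) :
    Ξ x + ((⟪w, y - x⟫ + β / 2 * ‖y - x‖ ^ 2 : ℝ) : EReal) ≤ Ξ y := by
  rcases eq_or_ne (Ξ y) ⊤ with hy | hy
  · exact hy ▸ le_top
  rcases eq_or_ne (Ξ x) ⊥ with hx | hx
  · simp [hx]
  obtain ⟨a, ha⟩ : ∃ a : ℝ, Ξ x = a := ⟨_, (EReal.coe_toReal (hw.ne_top hy) hx).symm⟩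
  obtain ⟨b, hb⟩ : ∃ b : ℝ, Ξ y = b := ⟨_, (EReal.coe_toReal hy (hw.ne_bot hx)).symm⟩
  have hlim : Filter.Tendsto (fun s : ℝ => (1 - s) * (β / 2 * ‖y - x‖ ^ 2))
      (nhdsWithin 0 (Set.Ioi 0)) (nhds (β / 2 * ‖y - x‖ ^ 2)) :=
    tendsto_nhdsWithin_of_tendsto_nhds (Continuous.tendsto' (by fun_prop) _ _ (by ring))
  have hle : β / 2 * ‖y - x‖ ^ 2 ≤ b - a - ⟪w, y - x⟫ := by
    refine le_of_tendsto hlim ?_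
    filter_upwards [Ioo_mem_nhdsGT one_pos] with s hs using hw.one_sub_mul_sq_le hΞ ha hb hs
  rw [ha, hb]
  norm_cast
  linarith

end ESubgradAt

/-- The Bregman distance `φ u - φ x - ⟪w, u - x⟫` of a finite-valued `φ`. It is the real counterpart
of `bregman`, without the test that `w` is a subgradient of `φ` at `x`, so that the
distances along a sequence can be added and subtracted freely. -/
def realBregman (φ : E → ℝ) (u x w : E) : ℝ := φ u - φ x - ⟪w, u - x⟫

section Bregman

variable {φ : E → ℝ} {u x w : E} {β C : ℝ}

lemma realBregman_three_point (φ : E → ℝ) (u x y w z : E) :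
    realBregman φ u y z + realBregman φ y x w = realBregman φ u x w + ⟪w - z, u - y⟫ := by
  simp only [realBregman, inner_sub_left, inner_sub_right]
  ring

-- The linear term is absorbed by Young's inequality `‖w‖ ‖u - x‖ ≤ ‖w‖² / β + (β / 4) ‖u - x‖²`.
lemma realBregman_le_of_abs_le (hβ : 0 < β) (hu : |φ u| ≤ C) (hx : |φ x| ≤ C)
    (hquad : β / 2 * ‖u - x‖ ^ 2 ≤ realBregman φ u x w) :
    realBregman φ u x w ≤ 4 * C + 2 * (‖w‖ ^ 2 / β) := by
  have hinner : -⟪w, u - x⟫ ≤ ‖w‖ * ‖u - x‖ := (neg_le_abs _).trans (abs_real_inner_le_norm _ _)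
  have hyoung : ‖w‖ * ‖u - x‖ ≤ ‖w‖ ^ 2 / β + β / 4 * ‖u - x‖ ^ 2 := by
    have hsq : 0 ≤ (‖w‖ - β / 2 * ‖u - x‖) ^ 2 / β := by positivity
    have hexpand : (‖w‖ - β / 2 * ‖u - x‖) ^ 2 / β =
        ‖w‖ ^ 2 / β + β / 4 * ‖u - x‖ ^ 2 - ‖w‖ * ‖u - x‖ := by field_simp; ring
    linarith
  have hdef : realBregman φ u x w ≤ 2 * C + ‖w‖ * ‖u - x‖ := by
    unfold realBregman
    linarith [(abs_le.mp hu).2, (abs_le.mp hx).1]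
  linarith

lemma ESubgradAt.sq_le_realBregman {Ξ : E → EReal} (hΞ : StronglyConvexE β Ξ)
    (hw : ESubgradAt Ξ x w) (hx : Ξ x ≠ ⊥) (hu : Ξ u ≠ ⊤) :
    β / 2 * ‖u - x‖ ^ 2 ≤ realBregman (fun ν => (Ξ ν).toReal) u x w := by
  have h := hw.add_sq_le hΞ u
  rw [← EReal.coe_toReal (hw.ne_top hu) hx, ← EReal.coe_toReal hu (hw.ne_bot hx)] at h
  norm_cast at h
  unfold realBregman
  linarith

theorem sub_mul_sq_le_of_common_point {y z : ℕ → E} {S : Set E} {W δ : ℝ} {s t : ℕ}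
    (hst : s ≤ t) (hβ : 0 < β) (hδ : 0 ≤ δ) (hφ : ∀ ν ∈ S, |φ ν| ≤ C) (hy : ∀ r, y r ∈ S)
    (hz : ‖z s‖ ≤ W)
    (hquad : ∀ r, ∀ ν ∈ S, β / 2 * ‖ν - y r‖ ^ 2 ≤ realBregman φ ν (y r) (z r))
    (hstep : ∀ r, s ≤ r → r < t → δ ≤ ‖y (r + 1) - y r‖) (hu : u ∈ S)
    (hnormal : ∀ r, s ≤ r → r < t → ⟪z r - z (r + 1), u - y (r + 1)⟫ ≤ 0) :
    ((t : ℝ) - s) * (β / 2 * δ ^ 2) ≤ 4 * C + 2 * (W ^ 2 / β) := by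
  have hdecr : ∀ r, s ≤ r → r < t →
      realBregman φ u (y (r + 1)) (z (r + 1)) + β / 2 * δ ^ 2 ≤ realBregman φ u (y r) (z r) := by
    intro r hsr hrt
    have hdist : β / 2 * δ ^ 2 ≤ realBregman φ (y (r + 1)) (y r) (z r) := calc
      β / 2 * δ ^ 2 ≤ β / 2 * ‖y (r + 1) - y r‖ ^ 2 := by gcongr; exact hstep r hsr hrt
      _ ≤ _ := hquad r _ (hy (r + 1))
    linarith [hnormal r hsr hrt, realBregman_three_point φ u (y r) (y (r + 1)) (z r) (z (r + 1))]
  have hend : 0 ≤ realBregman φ u (y t) (z t) := le_trans (by positivity) (hquad t u hu)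
  calc ((t : ℝ) - s) * (β / 2 * δ ^ 2)
      ≤ ((t : ℝ) - s) * (β / 2 * δ ^ 2) + realBregman φ u (y t) (z t) := by linarith
    _ ≤ realBregman φ u (y s) (z s) := sub_mul_add_le_of_succ_add_le
        (B := fun r => realBregman φ u (y r) (z r)) hst hdecr
    _ ≤ 4 * C + 2 * (‖z s‖ ^ 2 / β) :=
      realBregman_le_of_abs_le hβ (hφ u hu) (hφ _ (hy s)) (hquad s u hu)
    _ ≤ 4 * C + 2 * (W ^ 2 / β) := by gcongr

end Bregman

lemma abs_toReal_le {a : EReal} {C : ℝ} (hl : -(C : EReal) ≤ a) (hu : a ≤ (C : EReal)) :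
    |a.toReal| ≤ C := by
  lift a to ℝ using ⟨ne_top_of_le_ne_top (EReal.coe_ne_top C) hu,
    ne_bot_of_le_ne_bot (EReal.coe_ne_bot (-C)) hl⟩
  exact abs_le.mpr ⟨by exact_mod_cast hl, by exact_mod_cast hu⟩

/-- The primal part of a run of the Extended Level-Set method: iterates `μ t`, oracle answers `v t`,
bundles `ESet t` and bounds `hbar t`, `hlow t` produced from the initial bundle `Einit`. Of the
proximal subproblem it records only that its solution lies in the level set; the prox function and
its subgradients are kept outside. -/
structure IsLevelSetRun (ψ : E → EReal) (Eb Einit : Set E) (lam : ℝ) (μ v : ℕ → E)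
    (ESet : ℕ → Set E) (hbar hlow : ℕ → EReal) : Prop where
  ne_bot : ∀ ν, ψ ν ≠ ⊥
  start_ne_top : ψ (μ 0) ≠ ⊤
  nonempty : Eb.Nonempty
  init_subset : Einit ⊆ Eb
  lam_mem : lam ∈ Set.Ioo (0 : ℝ) 1
  subgrad : ∀ t, ESubgradAt (supportFn Eb) (μ t) (v t)
  bundle_zero : ESet 0 = Einit ∪ {v 0}
  bundle_succ : ∀ t, ESet (t + 1) = ESet t ∪ {v (t + 1)}
  upper_zero : hbar 0 = ψ (μ 0) + supportFn Eb (μ 0)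
  upper_succ : ∀ t, hbar (t + 1) = min (hbar t) (ψ (μ (t + 1)) + supportFn Eb (μ (t + 1)))
  lower_eq : ∀ t, hlow t = ⨅ ν : E, ψ ν + supportFn (ESet t) ν
  mem_levelSet : ∀ t, μ (t + 1) ∈ levelSet ψ ESet lam hbar hlow t

namespace IsLevelSetRun

variable {ψ : E → EReal} {Eb Einit : Set E} {lam : ℝ} {μ v : ℕ → E} {ESet : ℕ → Set E}

section Extended

variable {hbar hlow : ℕ → EReal} (h : IsLevelSetRun ψ Eb Einit lam μ v ESet hbar hlow)
include h

lemma cut_mem_bundle (t : ℕ) : v t ∈ ESet t := by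
  cases t with
  | zero => simp [h.bundle_zero]
  | succ t => simp [h.bundle_succ]

lemma monotone_bundle : Monotone ESet :=
  monotone_nat_of_le_succ fun t => h.bundle_succ t ▸ Set.subset_union_left

lemma init_subset_bundle (t : ℕ) : Einit ⊆ ESet t :=
  (h.bundle_zero ▸ Set.subset_union_left : Einit ⊆ ESet 0).trans (h.monotone_bundle t.zero_le)

lemma supportFn_bundle_ne_bot (t : ℕ) (ν : E) : supportFn (ESet t) ν ≠ ⊥ :=
  supportFn_ne_bot ⟨_, h.cut_mem_bundle t⟩ ν

lemma supportFn_bundle_le (t : ℕ) (ν : E) : supportFn (ESet t) ν ≤ supportFn Eb ν := by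
  have hcut : ∀ r, ∀ x ∈ ({v r} : Set E), ((⟪ν, x⟫ : ℝ) : EReal) ≤ supportFn Eb ν := by
    rintro r _ rfl
    exact (h.subgrad r).inner_le_supportFn h.nonempty ν
  rw [supportFn_le_iff]
  induction t with
  | zero =>
    rw [h.bundle_zero]
    rintro x (hx | hx)
    exacts [inner_le_supportFn (h.init_subset hx) ν, hcut 0 x hx]
  | succ t ih =>
    rw [h.bundle_succ]
    rintro x (hx | hx)
    exacts [ih x hx, hcut (t + 1) x hx]

lemma antitone_upper : Antitone hbar :=
  antitone_nat_of_succ_le fun t => h.upper_succ t ▸ min_le_left _ _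

lemma upper_le (t : ℕ) : hbar t ≤ ψ (μ t) + supportFn Eb (μ t) := by
  cases t with
  | zero => exact h.upper_zero.le
  | succ t => exact h.upper_succ t ▸ min_le_right _ _

lemma lower_le (t : ℕ) (ν : E) : hlow t ≤ ψ ν + supportFn (ESet t) ν :=
  h.lower_eq t ▸ iInf_le _ ν

lemma monotone_lower : Monotone hlow := by
  intro s t hst
  rw [h.lower_eq t]
  exact le_iInf fun ν =>
    (h.lower_le s ν).trans (add_le_add_right (supportFn_mono (h.monotone_bundle hst) ν) _)

lemma lower_le_upper (t : ℕ) : hlow t ≤ hbar t := by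
  have hobj : ∀ ν, hlow t ≤ ψ ν + supportFn Eb ν := fun ν =>
    (h.lower_le t ν).trans (add_le_add_right (h.supportFn_bundle_le t ν) _)
  have hall : ∀ r, hlow t ≤ hbar r := by
    intro r
    induction r with
    | zero => exact h.upper_zero ▸ hobj _
    | succ r ih => exact h.upper_succ r ▸ le_min ih (hobj _)
  exact hall t

lemma upper_ne_top (t : ℕ) : hbar t ≠ ⊤ := by
  refine ne_top_of_le_ne_top ?_ (h.antitone_upper t.zero_le)
  rw [h.upper_zero]
  exact EReal.add_ne_top h.start_ne_top (h.subgrad 0).supportFn_ne_top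

lemma lower_ne_bot (t : ℕ) : hlow t ≠ ⊥ := by
  intro hbot
  have hmem := h.mem_levelSet t
  rw [levelSet, Set.mem_ofPred_eq, hbot, EReal.coe_mul_bot_of_pos (sub_pos.mpr h.lam_mem.2),
    EReal.add_bot, le_bot_iff] at hmem
  exact EReal.add_ne_bot_iff.mpr ⟨h.ne_bot _, h.supportFn_bundle_ne_bot t _⟩ hmem

lemma upper_ne_bot (t : ℕ) : hbar t ≠ ⊥ :=
  ne_bot_of_le_ne_bot (h.lower_ne_bot t) (h.lower_le_upper t)

lemma lower_ne_top (t : ℕ) : hlow t ≠ ⊤ :=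
  ne_top_of_le_ne_top (h.upper_ne_top t) (h.lower_le_upper t)

end Extended

section Real

variable {ub lb : ℕ → ℝ}

lemma mem_levelSet_coe_iff {t : ℕ} {ν : E} :
    ν ∈ levelSet ψ ESet lam (fun t => (ub t : EReal)) (fun t => (lb t : EReal)) t ↔
      ψ ν + supportFn (ESet t) ν ≤ ((lam * ub t + (1 - lam) * lb t : ℝ) : EReal) := by
  rw [levelSet, Set.mem_ofPred_eq]
  norm_cast

variable (h : IsLevelSetRun ψ Eb Einit lam μ v ESet (fun t => (ub t : EReal))
  (fun t => (lb t : EReal)))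
include h

lemma gap_nonneg (t : ℕ) : 0 ≤ ub t - lb t :=
  sub_nonneg.mpr (EReal.coe_le_coe_iff.mp (h.lower_le_upper t))

lemma antitone_gap : Antitone fun t => ub t - lb t := fun _ _ hst =>
  sub_le_sub (EReal.coe_le_coe_iff.mp (h.antitone_upper hst))
    (EReal.coe_le_coe_iff.mp (h.monotone_lower hst))

lemma objective_ne_top (t : ℕ) : ψ (μ t) ≠ ⊤ := by
  cases t with
  | zero => exact h.start_ne_top
  | succ t =>
    intro htop
    have hmem := mem_levelSet_coe_iff.mp (h.mem_levelSet t)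
    rw [htop, EReal.top_add_of_ne_bot (h.supportFn_bundle_ne_bot t _), top_le_iff] at hmem
    exact EReal.coe_ne_top _ hmem

lemma levelSet_subset (t : ℕ) :
    levelSet ψ ESet lam (fun t => (ub t : EReal)) (fun t => (lb t : EReal)) t ⊆
      {ν | ψ ν + supportFn Einit ν ≤ (ub 0 : EReal)} := by
  intro ν hν
  have hlevel : lam * ub t + (1 - lam) * lb t ≤ ub 0 := by
    have hanti : ub t ≤ ub 0 := EReal.coe_le_coe_iff.mp (h.antitone_upper t.zero_le)
    nlinarith [h.gap_nonneg t, h.lam_mem.2]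
  calc ψ ν + supportFn Einit ν
      ≤ ψ ν + supportFn (ESet t) ν :=
        add_le_add_right (supportFn_mono (h.init_subset_bundle t) ν) _
    _ ≤ ((lam * ub t + (1 - lam) * lb t : ℝ) : EReal) := mem_levelSet_coe_iff.mp hν
    _ ≤ (ub 0 : EReal) := EReal.coe_le_coe hlevel

lemma iterate_mem (t : ℕ) : μ t ∈ {ν | ψ ν + supportFn Einit ν ≤ (ub 0 : EReal)} := by
  cases t with
  | zero =>
    rw [Set.mem_ofPred_eq, h.upper_zero]
    exact add_le_add_right (supportFn_mono h.init_subset _) _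
  | succ t => exact h.levelSet_subset t (h.mem_levelSet t)

lemma gap_le_mul_norm_step {Cv Cψ : ℝ} {t : ℕ} (hv : ‖v t‖ ≤ Cv)
    (hψ : ψ (μ t) - ψ (μ (t + 1)) ≤ ((Cψ * ‖μ (t + 1) - μ t‖ : ℝ) : EReal)) :
    (1 - lam) * (ub t - lb t) ≤ (Cψ + Cv) * ‖μ (t + 1) - μ t‖ := by
  have hlevel : ψ (μ (t + 1)) + ((⟪μ (t + 1), v t⟫ : ℝ) : EReal) ≤
      ((lam * ub t + (1 - lam) * lb t : ℝ) : EReal) :=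
    (add_le_add_right (inner_le_supportFn (h.cut_mem_bundle t) _) _).trans
      (mem_levelSet_coe_iff.mp (h.mem_levelSet t))
  have hupper := h.upper_le t
  rw [(h.subgrad t).supportFn_eq_inner h.nonempty] at hupper
  lift ψ (μ t) to ℝ using ⟨h.objective_ne_top t, h.ne_bot _⟩ with p
  lift ψ (μ (t + 1)) to ℝ using ⟨h.objective_ne_top (t + 1), h.ne_bot _⟩ with p'
  norm_cast at hlevel hupper hψ
  have hinner : ⟪μ t, v t⟫ - ⟪μ (t + 1), v t⟫ ≤ Cv * ‖μ (t + 1) - μ t‖ := calc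
    ⟪μ t, v t⟫ - ⟪μ (t + 1), v t⟫ = ⟪μ t - μ (t + 1), v t⟫ := (inner_sub_left _ _ _).symm
    _ ≤ ‖μ t - μ (t + 1)‖ * ‖v t‖ := real_inner_le_norm _ _
    _ = ‖v t‖ * ‖μ (t + 1) - μ t‖ := by rw [norm_sub_rev, mul_comm]
    _ ≤ Cv * ‖μ (t + 1) - μ t‖ := by gcongr
  linarith

lemma exists_forall_mem_levelSet {s t : ℕ}
    (hgap : (1 - lam) * (ub s - lb s) < ub t - lb t) :
    ∃ u, ∀ r, s ≤ r → r ≤ t →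
      u ∈ levelSet ψ ESet lam (fun t => (ub t : EReal)) (fun t => (lb t : EReal)) r := by
  have hlow : (lb t : EReal) < ((ub t - (1 - lam) * (ub s - lb s) : ℝ) : EReal) :=
    EReal.coe_lt_coe (by linarith)
  rw [h.lower_eq, iInf_lt_iff] at hlow
  obtain ⟨u, hu⟩ := hlow
  refine ⟨u, fun r hsr hrt => mem_levelSet_coe_iff.mpr ?_⟩
  have hlevel : ub t - (1 - lam) * (ub s - lb s) ≤ lam * ub r + (1 - lam) * lb r := by
    have hupper : ub t ≤ ub r := EReal.coe_le_coe_iff.mp (h.antitone_upper hrt)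
    nlinarith [h.antitone_gap hsr, h.lam_mem.2]
  calc ψ u + supportFn (ESet r) u
      ≤ ψ u + supportFn (ESet t) u := add_le_add_right (supportFn_mono (h.monotone_bundle hrt) u) _
    _ ≤ ((ub t - (1 - lam) * (ub s - lb s) : ℝ) : EReal) := hu.le
    _ ≤ ((lam * ub r + (1 - lam) * lb r : ℝ) : EReal) := EReal.coe_le_coe hlevel

theorem sub_add_one_mul_sq_gap_le {φ : E → ℝ} {w : ℕ → E} {β C W L : ℝ} {s t : ℕ} (hβ : 0 < β)
    (hL : 0 < L) (hφ : ∀ ν, ψ ν + supportFn Einit ν ≤ (ub 0 : EReal) → |φ ν| ≤ C)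
    (hw : ‖w s‖ ≤ W)
    (hquad : ∀ r ν, ψ ν + supportFn Einit ν ≤ (ub 0 : EReal) →
      β / 2 * ‖ν - μ r‖ ^ 2 ≤ realBregman φ ν (μ r) (w r))
    (hnormal : ∀ r, w r - w (r + 1) ∈ normalCone
      (levelSet ψ ESet lam (fun t => (ub t : EReal)) (fun t => (lb t : EReal)) r) (μ (r + 1)))
    (hstep : ∀ r, (1 - lam) * (ub r - lb r) ≤ L * ‖μ (r + 1) - μ r‖)
    (hst : s ≤ t) (hgap : (1 - lam) * (ub s - lb s) < ub t - lb t) :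
    ((t : ℝ) - s + 1) * (ub t - lb t) ^ 2 ≤
      (4 * C + 2 * (W ^ 2 / β)) / (β / 2 * ((1 - lam) / L) ^ 2) := by
  have hlam : 0 < 1 - lam := sub_pos.mpr h.lam_mem.2
  have hgap_nonneg := h.gap_nonneg t
  obtain ⟨u, hu⟩ := h.exists_forall_mem_levelSet hgap
  have hlength : ∀ r, s ≤ r → r < t + 1 →
      (1 - lam) * (ub t - lb t) / L ≤ ‖μ (r + 1) - μ r‖ := fun r _ hrt =>
    (div_le_iff₀' hL).mpr <|
      (mul_le_mul_of_nonneg_left (h.antitone_gap (Nat.le_of_lt_succ hrt)) hlam.le).trans (hstep r)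
  have hsum := sub_mul_sq_le_of_common_point (hst.trans t.le_succ) hβ (by positivity) hφ
    h.iterate_mem hw hquad hlength (h.levelSet_subset s (hu s le_rfl hst))
    fun r hsr hrt => hnormal r u (hu r hsr (Nat.le_of_lt_succ hrt))
  rw [le_div_iff₀ (by positivity)]
  refine le_trans (le_of_eq ?_) hsum
  push_cast
  ring

end Real

end IsLevelSetRun

theorem stmt13_general {ψ Ξ : E → EReal} {Eb Einit : Set E} {β lam Cv CΞ Cw Cψ : ℝ}
    {μ w v : ℕ → E} {ESet : ℕ → Set E} {hbar hlow : ℕ → EReal}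
    (hrun : IsLevelSetRun ψ Eb Einit lam μ v ESet hbar hlow)
    (hβ : 0 < β) (hΞ : StronglyConvexE β Ξ) (hw : ∀ t, ESubgradAt Ξ (μ t) (w t))
    (hnormal : ∀ t, w t - w (t + 1) ∈ normalCone (levelSet ψ ESet lam hbar hlow t) (μ (t + 1)))
    (hv_bound : ∀ t, ‖v t‖ ≤ Cv)
    (hΞ_bound : ∀ ν, ψ ν + supportFn Einit ν ≤ hbar 0 → -(CΞ : EReal) ≤ Ξ ν ∧ Ξ ν ≤ (CΞ : EReal))
    (hw_bound : ∀ t, ‖w t‖ ≤ Cw)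
    (hψ : ∀ t, ψ (μ t) - ψ (μ (t + 1)) ≤ ((Cψ * ‖μ (t + 1) - μ t‖ : ℝ) : EReal)) :
    ∃ C : ℝ, 0 < C ∧ ∀ t : ℕ, 1 ≤ t → hbar t - hlow t ≤ ((C / √t : ℝ) : EReal) := by
  lift hbar to ℕ → ℝ using fun t => ⟨hrun.upper_ne_top t, hrun.upper_ne_bot t⟩ with ub
  lift hlow to ℕ → ℝ using fun t => ⟨hrun.lower_ne_top t, hrun.lower_ne_bot t⟩ with lb
  have hφ : ∀ ν, ψ ν + supportFn Einit ν ≤ (ub 0 : EReal) → |(Ξ ν).toReal| ≤ CΞ := fun ν hν =>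
    abs_toReal_le (hΞ_bound ν hν).1 (hΞ_bound ν hν).2
  have hCΞ : 0 ≤ CΞ := (abs_nonneg _).trans (hφ _ (hrun.iterate_mem 0))
  have hquad : ∀ t ν, ψ ν + supportFn Einit ν ≤ (ub 0 : EReal) →
      β / 2 * ‖ν - μ t‖ ^ 2 ≤ realBregman (fun ν => (Ξ ν).toReal) ν (μ t) (w t) := fun t ν hν =>
    (hw t).sq_le_realBregman hΞ
      (ne_bot_of_le_ne_bot (EReal.coe_ne_bot (-CΞ)) (hΞ_bound _ (hrun.iterate_mem t)).1)
      (ne_top_of_le_ne_top (EReal.coe_ne_top CΞ) (hΞ_bound ν hν).2)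
  have hL : 0 < max (Cψ + Cv) 1 := one_pos.trans_le (le_max_right _ _)
  have hstep : ∀ t, (1 - lam) * (ub t - lb t) ≤ max (Cψ + Cv) 1 * ‖μ (t + 1) - μ t‖ := fun t =>
    (hrun.gap_le_mul_norm_step (hv_bound t) (hψ t)).trans (by gcongr; exact le_max_left _ _)
  have hrate := add_one_mul_sq_le_of_blocks (sub_nonneg.mpr hrun.lam_mem.2.le)
    (sub_lt_self 1 hrun.lam_mem.1) (by positivity) hrun.gap_nonneg fun s t =>
      hrun.sub_add_one_mul_sq_gap_le hβ hL hφ (hw_bound s) hquad hnormal hstep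
  obtain ⟨C, hC, hle⟩ := exists_le_div_sqrt_of_add_one_mul_sq_le hrate
  exact ⟨C, hC, fun t ht => by exact_mod_cast hle t ht⟩

/-- Convergence of the Extended Level-Set method: under assumptions (H2), (H4), (H5), (H6),
the primal-dual gap `Δ^t = h̄^t - h̲^t` decays like `O(1/√t)`. -/
theorem stmt13 {H : Type*} [NormedAddCommGroup H] [InnerProductSpace ℝ H] [CompleteSpace H]
    -- data of the problem
    (ψ : H → EReal) (hψproper : EProper ψ) (hψconv : EConvexOn ψ)
    (hψlsc : LowerSemicontinuous ψ)
    (Eb : Set H) (hEbne : Eb.Nonempty) (hEbcl : IsClosed Eb) (hEbconv : Convex ℝ Eb)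
    (Ξ : H → EReal) (hΞproper : EProper Ξ) (hΞlsc : LowerSemicontinuous Ξ)
    (β : ℝ) (hβ : 0 < β) (hΞsc : StronglyConvexE β Ξ)
    (lam : ℝ) (hlam : lam ∈ Set.Ioo (0 : ℝ) 1)
    -- iterates of the algorithm
    (μ w v : ℕ → H) (ESet : ℕ → Set H) (Einit : Set H) (hbar hlow : ℕ → EReal)
    -- initialization
    (hμ0dom : supportFn Eb (μ 0) ≠ ⊤ ∧ ψ (μ 0) ≠ ⊤)
    (hw0 : ESubgradAt Ξ (μ 0) (w 0))
    (hEinit_sub : Einit ⊆ Eb) (hEinit_bdd : Bornology.IsBounded Einit)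
    (hEinit_coer : ECoercive (fun ν => ψ ν + supportFn Einit ν))
    -- the iteration rules
    (hv : ∀ t, ESubgradAt (supportFn Eb) (μ t) (v t))
    (hESet0 : ESet 0 = Einit ∪ {v 0})
    (hESetS : ∀ t, ESet (t + 1) = ESet t ∪ {v (t + 1)})
    (hbar0 : hbar 0 = ψ (μ 0) + supportFn Eb (μ 0))
    (hbarS : ∀ t, hbar (t + 1) = min (hbar t) (ψ (μ (t + 1)) + supportFn Eb (μ (t + 1))))
    (hlowdef : ∀ t, hlow t = ⨅ ν : H, ψ ν + supportFn (ESet t) ν)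
    (hμS : ∀ t, μ (t + 1) ∈ levelSet ψ ESet lam hbar hlow t ∧
      ∀ ν ∈ levelSet ψ ESet lam hbar hlow t,
        bregman Ξ (μ (t + 1)) (μ t) (w t) ≤ bregman Ξ ν (μ t) (w t))
    (hwS : ∀ t, ESubgradAt Ξ (μ (t + 1)) (w (t + 1)) ∧
      w t - w (t + 1) ∈ normalCone (levelSet ψ ESet lam hbar hlow t) (μ (t + 1)))
    -- assumption (H2)
    (H2 : ∃ Cor : ℝ, ∀ t, ‖v t‖ ≤ Cor)
    -- assumption (H4): `Q^{-1} = {ψ + σ_{E^{-1}} ≤ h̄⁰} ⊆ dom Ξ` and `Ξ` bounded on it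
    (H4 : (∀ ν : H, ψ ν + supportFn Einit ν ≤ hbar 0 → Ξ ν ≠ ⊤) ∧
      ∃ CΞ : ℝ, ∀ ν : H, ψ ν + supportFn Einit ν ≤ hbar 0 →
        -((CΞ : EReal)) ≤ Ξ ν ∧ Ξ ν ≤ (CΞ : EReal))
    -- assumption (H5)
    (H5 : ∃ Cw : ℝ, ∀ t, ‖w t‖ ≤ Cw)
    -- assumption (H6)
    (H6 : ∃ Cψ : ℝ, ∀ t,
      ψ (μ (t + 1)) - ψ (μ t) ≤ ((Cψ * ‖μ (t + 1) - μ t‖ : ℝ) : EReal) ∧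
      ψ (μ t) - ψ (μ (t + 1)) ≤ ((Cψ * ‖μ (t + 1) - μ t‖ : ℝ) : EReal)) :
    ∃ C : ℝ, 0 < C ∧ ∀ t : ℕ, 1 ≤ t →
      hbar t - hlow t ≤ ((C / Real.sqrt t : ℝ) : EReal) := by
  obtain ⟨_, hv_bound⟩ := H2
  obtain ⟨_, _, hΞ_bound⟩ := H4
  obtain ⟨_, hw_bound⟩ := H5
  obtain ⟨_, hψ_lip⟩ := H6
  exact stmt13_general
    ⟨hψproper.1, hμ0dom.2, hEbne, hEinit_sub, hlam, hv, hESet0, hESetS, hbar0, hbarS, hlowdef,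
      fun t => (hμS t).1⟩
    hβ hΞsc (fun | 0 => hw0 | t + 1 => (hwS t).1) (fun t => (hwS t).2) hv_bound hΞ_bound hw_bound
    fun t => (hψ_lip t).2
end
end

section
/- Let E₁ and E₂ be real Hilbert spaces, β > 0, f : E₁ → ℝ convex and Fréchet differentiable with β-Lipschitz gradient, A : E₁ → E₂ a bounded linear operator, b ∈ E₂, and Q = Q₁ + Q₂ ⊆ E₂ where Q₁ is nonempty closed convex bounded and Q₂ is a closed convex cone. Let K^{−1} ⊆ E₁ be a compact set such that −b lies in the interior of Q₂^⊖ − A(cloconv K^{−1}), where Q₂^⊖ = {x₂ ∈ E₂ | ⟨μ₂, x₂⟩ ≤ 0 for all μ₂ ∈ Q₂} and cloconv denotes closed convex hull. Define E^{−1} = {(x₁, A x₁) | x₁ ∈ −K^{−1}} ⊆ E₁ × E₂ and ψ : E₁ × E₂ → ℝ ∪ {+∞} by ψ(μ₁, μ₂) = f*(μ₁) + ⟨μ₂, b⟩ if μ₂ ∈ Q and +∞ otherwise. Then E^{−1} is bounded and the function μ ↦ ψ(μ) + σ_{E^{−1}}(μ) is coercive on E₁ × E₂. -/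
open scoped Classical
open scoped RealInnerProductSpace

noncomputable section

variable {E : Type*} [NormedAddCommGroup E] [InnerProductSpace ℝ E]

/-- Fenchel conjugate of a real-valued function, with values in `EReal`. -/
def fenchelR (f : E → ℝ) (μ : E) : EReal := ⨆ x : E, ((⟪μ, x⟫ - f x : ℝ) : EReal)

/-- Support function of a subset of a product of Hilbert spaces, for the canonical inner
product of the product. -/
def supportProd {E₁ E₂ : Type*} [NormedAddCommGroup E₁] [InnerProductSpace ℝ E₁]
    [NormedAddCommGroup E₂] [InnerProductSpace ℝ E₂]
    (C : Set (E₁ × E₂)) (μ : E₁ × E₂) : EReal :=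
  ⨆ x : C, ((⟪μ.1, (x : E₁ × E₂).1⟫ + ⟪μ.2, (x : E₁ × E₂).2⟫ : ℝ) : EReal)

/-!
Perturbing the qualification condition by a vector of norm at most `r` in the direction of `μ₂`
writes `b - A k` as that vector minus some `p ∈ Q₂^⊖`, with `k` in the closed convex hull of
`K^{-1}`. Since `⟨μ₂, p⟩` is bounded above over `μ₂ ∈ Q₁ + Q₂`, this gives
`⟨μ₂, b - A k⟩ ≥ r ‖μ₂‖ - D`. On the other side, testing the conjugate at `k + v` with `‖v‖ ≤ r`
gives `f*(μ₁) ≥ ⟨μ₁, k⟩ + r ‖μ₁‖ - C`, where `C` bounds `f` on a bounded set, and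
`σ_{E^{-1}}(μ) ≥ -⟨μ₁, k⟩ - ⟨μ₂, A k⟩`. In the sum the terms `⟨μ₁, k⟩` cancel, leaving
`ψ(μ) + σ_{E^{-1}}(μ) ≥ r (‖μ₁‖ + ‖μ₂‖) - C - D`.
-/

lemma coe_apply_le_of_mem_closure_convexHull {V : Type*} [TopologicalSpace V] [AddCommMonoid V]
    [Module ℝ V] (L : V →L[ℝ] ℝ) {s : Set V} {c : EReal} (hs : ∀ x ∈ s, (L x : EReal) ≤ c)
    {x : V} (hx : x ∈ closure (convexHull ℝ s)) : (L x : EReal) ≤ c := by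
  have h_convex : Convex ℝ {y : V | (L y : EReal) ≤ c} :=
    (Set.ordConnected_Iic.preimage_mono EReal.coe_strictMono.monotone).convex.linear_preimage
      L.toLinearMap
  have h_closed : IsClosed {y : V | (L y : EReal) ≤ c} :=
    isClosed_Iic.preimage (continuous_coe_real_ereal.comp L.continuous)
  exact closure_minimal (convexHull_min hs h_convex) h_closed hx

lemma isBounded_image_of_lipschitzOnWith {X Y : Type*} [PseudoMetricSpace X]
    [PseudoMetricSpace Y] {g : X → Y} {K : NNReal} {s : Set X} (hg : LipschitzOnWith K g s)
    (hs : Bornology.IsBounded s) : Bornology.IsBounded (g '' s) := by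
  obtain ⟨D, hD⟩ := Metric.isBounded_iff.1 hs
  refine Metric.isBounded_iff.2 ⟨K * D, ?_⟩
  rintro _ ⟨x, hx, rfl⟩ _ ⟨y, hy, rfl⟩
  exact (hg.dist_le_mul x hx y hy).trans (mul_le_mul_of_nonneg_left (hD hx hy) K.coe_nonneg)

lemma isBounded_image_of_hasFDerivWithinAt_of_convex {V W : Type*} [NormedAddCommGroup V]
    [NormedSpace ℝ V] [NormedAddCommGroup W] [NormedSpace ℝ W] {g : V → W} {g' : V → V →L[ℝ] W}
    {s : Set V} (hs_convex : Convex ℝ s) (hs : Bornology.IsBounded s)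
    (hg : ∀ x ∈ s, HasFDerivWithinAt g (g' x) s x) (hg' : Bornology.IsBounded (g' '' s)) :
    Bornology.IsBounded (g '' s) := by
  obtain ⟨C, hC⟩ := hg'.exists_norm_le
  have h_lip : LipschitzOnWith C.toNNReal g s :=
    hs_convex.lipschitzOnWith_of_nnnorm_hasFDerivWithin_le hg fun x hx =>
      NNReal.le_toNNReal_of_coe_le (hC _ (Set.mem_image_of_mem g' hx))
  exact isBounded_image_of_lipschitzOnWith h_lip hs

lemma isBounded_image_of_lipschitzWith_gradient [CompleteSpace E] {f : E → ℝ} {f' : E → E}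
    {K : NNReal} (hf : ∀ x, HasGradientAt f (f' x) x) (hf' : LipschitzWith K f') {s : Set E}
    (hs : Bornology.IsBounded s) : Bornology.IsBounded (f '' s) := by
  have h_hull : Bornology.IsBounded (convexHull ℝ s) := isBounded_convexHull.2 hs
  have h_image : Bornology.IsBounded (f '' convexHull ℝ s) :=
    isBounded_image_of_hasFDerivWithinAt_of_convex (convex_convexHull ℝ s) h_hull
      (fun x _ => (hf x).hasFDerivAt.hasFDerivWithinAt)
      (((InnerProductSpace.toDual ℝ E).lipschitz.comp hf').isBounded_image h_hull)
  exact h_image.subset (Set.image_mono (subset_convexHull ℝ s))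

lemma exists_norm_le_inner_eq_mul_norm {r : ℝ} (hr : 0 ≤ r) (x : E) :
    ∃ u : E, ‖u‖ ≤ r ∧ ⟪x, u⟫ = r * ‖x‖ := by
  rcases eq_or_ne x 0 with rfl | hx
  · exact ⟨0, by simpa using hr, by simp⟩
  · have hx' : ‖x‖ ≠ 0 := norm_ne_zero_iff.2 hx
    refine ⟨(r / ‖x‖) • x, ?_, ?_⟩
    · rw [norm_smul, norm_div, norm_norm, Real.norm_of_nonneg hr, div_mul_cancel₀ _ hx']
    · rw [real_inner_smul_right, real_inner_self_eq_norm_mul_norm, ← mul_assoc,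
        div_mul_cancel₀ _ hx']

lemma inner_sub_le_fenchelR (f : E → ℝ) (μ x : E) :
    ((⟪μ, x⟫ - f x : ℝ) : EReal) ≤ fenchelR f μ :=
  le_iSup (fun y : E => ((⟪μ, y⟫ - f y : ℝ) : EReal)) x

lemma eCoercive_of_mul_norm_sub_le {V : Type*} [NormedAddCommGroup V] {F : V → EReal} {r C : ℝ}
    (hr : 0 < r) (hF : ∀ x, ((r * ‖x‖ - C : ℝ) : EReal) ≤ F x) : ECoercive F := by
  intro M
  refine ⟨(M + C) / r, fun x hx => le_trans ?_ (hF x)⟩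
  rw [div_le_iff₀' hr] at hx
  exact EReal.coe_le_coe (by linarith)

section

open scoped Pointwise

lemma exists_mul_norm_add_inner_sub_le_fenchelR {f : E → ℝ} {s : Set E} {r : ℝ}
    (hr : 0 ≤ r) (hf : BddAbove (f '' (s + Metric.closedBall 0 r))) :
    ∃ C : ℝ, ∀ μ, ∀ k ∈ s, ((r * ‖μ‖ + ⟪μ, k⟫ - C : ℝ) : EReal) ≤ fenchelR f μ := by
  obtain ⟨C, hC⟩ := hf
  refine ⟨C, fun μ k hk => ?_⟩
  obtain ⟨v, hv, hμv⟩ := exists_norm_le_inner_eq_mul_norm hr μ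
  have hfC : f (k + v) ≤ C :=
    hC (Set.mem_image_of_mem f (Set.add_mem_add hk (mem_closedBall_zero_iff.2 hv)))
  refine le_trans (EReal.coe_le_coe ?_) (inner_sub_le_fenchelR f μ (k + v))
  rw [inner_add_right]
  linarith

lemma inner_le_mul_norm_of_mem_add {Q₁ Q₂ : Set E} {q : ℝ} (hQ₁ : ∀ x ∈ Q₁, ‖x‖ ≤ q) {p : E}
    (hp : ∀ x ∈ Q₂, ⟪x, p⟫ ≤ 0) {y : E} (hy : y ∈ Q₁ + Q₂) : ⟪y, p⟫ ≤ q * ‖p‖ := by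
  obtain ⟨x₁, hx₁, x₂, hx₂, rfl⟩ := Set.mem_add.1 hy
  calc
    ⟪x₁ + x₂, p⟫ = ⟪x₁, p⟫ + ⟪x₂, p⟫ := inner_add_left x₁ x₂ p
    _ ≤ ‖x₁‖ * ‖p‖ + 0 := add_le_add (real_inner_le_norm x₁ p) (hp x₂ hx₂)
    _ ≤ q * ‖p‖ := by
      rw [add_zero]
      gcongr
      exact hQ₁ x₁ hx₁

lemma exists_mul_norm_sub_le_inner_of_neg_mem_interior {Q₁ Q₂ S : Set E} {b : E}
    (hQ₁ : Bornology.IsBounded Q₁) (hS : Bornology.IsBounded S)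
    (hb : -b ∈ interior ({x : E | ∀ y ∈ Q₂, ⟪y, x⟫ ≤ 0} - S)) :
    ∃ r : ℝ, 0 < r ∧ ∃ D : ℝ, ∀ y ∈ Q₁ + Q₂, ∃ s ∈ S, r * ‖y‖ - D ≤ ⟪y, b - s⟫ := by
  obtain ⟨r, hr, h_ball⟩ :=
    Metric.nhds_basis_closedBall.mem_iff.1 (mem_interior_iff_mem_nhds.1 hb)
  obtain ⟨q, hq, hQ₁_le⟩ := hQ₁.exists_pos_norm_le
  obtain ⟨R, hS_le⟩ := hS.exists_norm_le
  refine ⟨r, hr, q * (r + ‖b‖ + R), fun y hy => ?_⟩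
  obtain ⟨u, hu, hyu⟩ := exists_norm_le_inner_eq_mul_norm hr.le y
  obtain ⟨p, hp, s, hs, hps⟩ := Set.mem_sub.1 (h_ball (show -b + u ∈ Metric.closedBall (-b) r by
    rwa [mem_closedBall_iff_norm, add_sub_cancel_left]))
  have hp_eq : p = u - b + s := by rw [sub_eq_iff_eq_add.1 hps]; abel
  have hp_le : ‖p‖ ≤ r + ‖b‖ + R := by
    rw [hp_eq]
    exact norm_add_le_of_le (norm_sub_le_of_le hu le_rfl) (hS_le s hs)
  refine ⟨s, hs, ?_⟩
  calc
    r * ‖y‖ - q * (r + ‖b‖ + R) ≤ ⟪y, u⟫ - q * ‖p‖ := by rw [hyu]; gcongr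
    _ ≤ ⟪y, u⟫ - ⟪y, p⟫ := by
      gcongr
      exact inner_le_mul_norm_of_mem_add hQ₁_le hp hy
    _ = ⟪y, b - s⟫ := by
      rw [← inner_sub_right, hp_eq]
      congr 1
      abel

variable {E₁ E₂ : Type*} [NormedAddCommGroup E₁] [InnerProductSpace ℝ E₁]
  [NormedAddCommGroup E₂] [InnerProductSpace ℝ E₂]

lemma inner_add_inner_le_supportProd {C : Set (E₁ × E₂)} {x : E₁ × E₂} (hx : x ∈ C)
    (μ : E₁ × E₂) : ((⟪μ.1, x.1⟫ + ⟪μ.2, x.2⟫ : ℝ) : EReal) ≤ supportProd C μ :=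
  le_iSup (fun y : C => ((⟪μ.1, (y : E₁ × E₂).1⟫ + ⟪μ.2, (y : E₁ × E₂).2⟫ : ℝ) : EReal)) ⟨x, hx⟩

lemma supportProd_ne_bot {C : Set (E₁ × E₂)} (hC : C.Nonempty) (μ : E₁ × E₂) :
    supportProd C μ ≠ ⊥ := by
  obtain ⟨x, hx⟩ := hC
  exact ne_bot_of_le_ne_bot (EReal.coe_ne_bot _) (inner_add_inner_le_supportProd hx μ)

lemma neg_inner_sub_inner_le_supportProd_graph (A : E₁ →L[ℝ] E₂) {K : Set E₁} {k : E₁}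
    (hk : k ∈ closure (convexHull ℝ K)) (μ : E₁ × E₂) :
    ((-⟪μ.1, k⟫ - ⟪μ.2, A k⟫ : ℝ) : EReal) ≤
      supportProd ((fun x : E₁ => (x, A x)) '' (-K)) μ := by
  let L : E₁ →L[ℝ] ℝ := -innerSL ℝ μ.1 - (innerSL ℝ μ.2).comp A
  refine coe_apply_le_of_mem_closure_convexHull L (fun x hx => ?_) hk
  have h_mem : (-x, A (-x)) ∈ (fun x : E₁ => (x, A x)) '' (-K) :=
    Set.mem_image_of_mem _ (Set.neg_mem_neg.2 hx)
  have hL : L x = ⟪μ.1, -x⟫ + ⟪μ.2, A (-x)⟫ := by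
    simp [L, sub_eq_add_neg]
  rw [hL]
  exact inner_add_inner_le_supportProd h_mem μ

theorem stmt15_general (f : E₁ → ℝ) (hf : ∀ s, Bornology.IsBounded s → BddAbove (f '' s))
    (A : E₁ →L[ℝ] E₂) (b : E₂) (Q₁ Q₂ : Set E₂) (hQ₁ : Bornology.IsBounded Q₁)
    (K : Set E₁) (hK : Bornology.IsBounded K)
    (hb : -b ∈ interior
      ({x₂ : E₂ | ∀ μ₂ ∈ Q₂, ⟪μ₂, x₂⟫ ≤ 0} - A '' closure (convexHull ℝ K))) :
    Bornology.IsBounded ((fun x₁ : E₁ => (x₁, A x₁)) '' (-K)) ∧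
    ECoercive (fun μ : E₁ × E₂ =>
      (if μ.2 ∈ Q₁ + Q₂ then fenchelR f μ.1 + ((⟪μ.2, b⟫ : ℝ) : EReal) else (⊤ : EReal)) +
      supportProd ((fun x₁ : E₁ => (x₁, A x₁)) '' (-K)) μ) := by
  refine ⟨((ContinuousLinearMap.id ℝ E₁).prod A).lipschitz.isBounded_image hK.neg, ?_⟩
  have h_hull : Bornology.IsBounded (closure (convexHull ℝ K)) :=
    (isBounded_convexHull.2 hK).closure
  obtain ⟨r, hr, D, hD⟩ := exists_mul_norm_sub_le_inner_of_neg_mem_interior hQ₁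
    (A.lipschitz.isBounded_image h_hull) hb
  obtain ⟨C, hC⟩ := exists_mul_norm_add_inner_sub_le_fenchelR hr.le
    (hf _ (h_hull.add Metric.isBounded_closedBall))
  refine eCoercive_of_mul_norm_sub_le (C := C + D) hr fun μ => ?_
  split_ifs with hμ
  · obtain ⟨-, ⟨k, hk, rfl⟩, hkD⟩ := hD μ.2 hμ
    refine le_trans ?_ (add_le_add (add_le_add_left (hC μ.1 k hk) _)
      (neg_inner_sub_inner_le_supportProd_graph A hk μ))
    have h_norm : r * ‖μ‖ ≤ r * ‖μ.1‖ + r * ‖μ.2‖ := by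
      rw [← mul_add, Prod.norm_def]
      gcongr
      exact max_le_add_of_nonneg (norm_nonneg _) (norm_nonneg _)
    rw [inner_sub_right] at hkD
    norm_cast
    linarith
  · have hK_nonempty : K.Nonempty := by
      by_contra! hK_empty
      simp [hK_empty] at hb
    rw [EReal.top_add_of_ne_bot (supportProd_ne_bot (hK_nonempty.neg.image _) μ)]
    exact le_top

end

open Pointwise in
/-- Coercivity of `ψ + σ_{E^{-1}}` for the dual problem of the DLS method: under the
qualification condition, `E^{-1} = {(x₁, Ax₁) | x₁ ∈ -K^{-1}}` is bounded and
`μ ↦ ψ(μ) + σ_{E^{-1}}(μ)` is coercive, where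
`ψ(μ₁,μ₂) = f*(μ₁) + ⟨μ₂, b⟩ + ι_Q(μ₂)` and `Q = Q₁ + Q₂`. -/
theorem stmt15 {E₁ E₂ : Type*}
    [NormedAddCommGroup E₁] [InnerProductSpace ℝ E₁] [CompleteSpace E₁]
    [NormedAddCommGroup E₂] [InnerProductSpace ℝ E₂] [CompleteSpace E₂]
    (β : ℝ) (hβ : 0 < β)
    (f : E₁ → ℝ) (f' : E₁ → E₁) (hfconv : ConvexOn ℝ Set.univ f)
    (hfdiff : ∀ x, HasGradientAt f (f' x) x) (hflip : LipschitzWith β.toNNReal f')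
    (A : E₁ →L[ℝ] E₂) (b : E₂)
    (Q₁ Q₂ : Set E₂)
    (hQ₁ne : Q₁.Nonempty) (hQ₁cl : IsClosed Q₁) (hQ₁conv : Convex ℝ Q₁)
    (hQ₁bdd : Bornology.IsBounded Q₁)
    (hQ₂ne : Q₂.Nonempty) (hQ₂cl : IsClosed Q₂) (hQ₂conv : Convex ℝ Q₂)
    (hQ₂cone : ∀ c : ℝ, 0 < c → ∀ x ∈ Q₂, c • x ∈ Q₂)
    (Kinit : Set E₁) (hKcpt : IsCompact Kinit)
    (hqual : -b ∈ interior
      ({x₂ : E₂ | ∀ μ₂ ∈ Q₂, ⟪μ₂, x₂⟫ ≤ 0} - A '' closure (convexHull ℝ Kinit))) :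
    Bornology.IsBounded ((fun x₁ : E₁ => (x₁, A x₁)) '' (-Kinit)) ∧
    ECoercive (fun μ : E₁ × E₂ =>
      (if μ.2 ∈ Q₁ + Q₂ then fenchelR f μ.1 + ((⟪μ.2, b⟫ : ℝ) : EReal) else (⊤ : EReal)) +
      supportProd ((fun x₁ : E₁ => (x₁, A x₁)) '' (-Kinit)) μ) :=
  stmt15_general f
    (fun _ hs => (isBounded_image_of_lipschitzWith_gradient hfdiff hflip hs).bddAbove)
    A b Q₁ Q₂ hQ₁bdd Kinit hKcpt.isBounded hqual
end
end

section
/- Let E be a real Hilbert space, K ⊆ E a compact set, w ∈ E, and m a finite signed Borel measure on K such that −m is a nonnegative measure. Let 𝔈m ∈ E be the unique vector satisfying ⟨μ, 𝔈m⟩ = ∫_K ⟨μ, v⟩ dm(v) for all μ ∈ E. Then 1 − m(K) ≥ 1 > 0 and the vector (w − 𝔈m)/(1 − m(K)) belongs to the closed convex hull of {w} ∪ K. -/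
open scoped Classical
open scoped RealInnerProductSpace

noncomputable section

variable {E : Type*} [NormedAddCommGroup E] [InnerProductSpace ℝ E]

open MeasureTheory

/-!
The measure `-m + δ_w` is positive, has mass `1 - m(K) > 0` and weak barycenter `w - 𝔈m`, and it is
carried by the closed convex hull of `{w} ∪ K`. By Hahn–Banach, a closed convex set carrying a
nonzero finite measure contains its normalised barycenter, because each continuous functional
averages to at most any upper bound it has on the set. In an incomplete space the vectors represent
only a dense set of the continuous functionals; this suffices, since `f ↦ ∫ f dν` is
norm-continuous as soon as `ν` has a finite first moment.
-/

section WeakBarycenter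

variable {V : Type*} [AddCommGroup V] [Module ℝ V] [TopologicalSpace V] [MeasurableSpace V]

/-- `e` is the barycenter `𝔈ν` of the positive measure `ν` in the weak sense: every continuous
linear functional `f` is `ν`-integrable with integral `f e`. There is no division by the mass
of `ν`, so `e` is the center of mass only if `ν` is a probability measure. -/
def HasBarycenter (ν : Measure V) (e : V) : Prop :=
  ∀ f : StrongDual ℝ V, Integrable f ν ∧ ∫ x, f x ∂ν = f e

namespace HasBarycenter

theorem dirac [OpensMeasurableSpace V] (w : V) : HasBarycenter (Measure.dirac w) w := fun f =>
  have hf : StronglyMeasurable f := f.continuous.measurable.stronglyMeasurable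
  ⟨integrable_dirac' hf enorm_lt_top, integral_dirac' f w hf⟩

theorem add {ν₁ ν₂ : Measure V} {e₁ e₂ : V} (h₁ : HasBarycenter ν₁ e₁)
    (h₂ : HasBarycenter ν₂ e₂) : HasBarycenter (ν₁ + ν₂) (e₁ + e₂) := fun f =>
  ⟨(h₁ f).1.add_measure (h₂ f).1, by
    rw [integral_add_measure (h₁ f).1 (h₂ f).1, (h₁ f).2, (h₂ f).2, map_add]⟩

variable [IsTopologicalAddGroup V] [ContinuousSMul ℝ V] [LocallyConvexSpace ℝ V]
  {ν : Measure V} [IsFiniteMeasure ν] {e : V}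

theorem inv_measureReal_smul_mem [NeZero ν] (hν : HasBarycenter ν e) {C : Set V}
    (hC : Convex ℝ C) (hC_closed : IsClosed C) (hνC : ∀ᵐ x ∂ν, x ∈ C) :
    (ν.real Set.univ)⁻¹ • e ∈ C := by
  by_contra he
  obtain ⟨f, u, hfC, hfe⟩ := geometric_hahn_banach_closed_point hC hC_closed he
  have average_le : ⨍ x, f x ∂ν ≤ u :=
    (convex_Iic u).average_mem isClosed_Iic (hνC.mono fun x hx => (hfC x hx).le) (hν f).1
  rw [average_eq, (hν f).2, ← map_smul] at average_le
  exact hfe.not_ge average_le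

theorem inv_one_add_measureReal_smul_add_mem_closure_convexHull [OpensMeasurableSpace V]
    (hν : HasBarycenter ν e) (w : V) {s : Set V} (hνs : ∀ᵐ x ∂ν, x ∈ closure s) :
    (1 + ν.real Set.univ)⁻¹ • (w + e) ∈ closure (convexHull ℝ ({w} ∪ s)) := by
  set C := closure (convexHull ℝ ({w} ∪ s))
  have subset_C : closure ({w} ∪ s) ⊆ C := closure_mono (subset_convexHull ℝ _)
  have dirac_C : ∀ᵐ x ∂Measure.dirac w, x ∈ C :=
    (ae_dirac_iff isClosed_closure.measurableSet).2 (subset_C (subset_closure (by simp)))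
  have ν_C : ∀ᵐ x ∂ν, x ∈ C :=
    hνs.mono fun x hx => subset_C (closure_mono Set.subset_union_right hx)
  have : NeZero (Measure.dirac w + ν) := ⟨by simp [← Measure.measure_univ_eq_zero]⟩
  have mass : (Measure.dirac w + ν).real Set.univ = 1 + ν.real Set.univ := by
    rw [measureReal_add_apply, probReal_univ]
  rw [← mass]
  exact ((dirac w).add hν).inv_measureReal_smul_mem (convex_convexHull ℝ _).closure
    isClosed_closure (ae_add_measure_iff.2 ⟨dirac_C, ν_C⟩)

end HasBarycenter

end WeakBarycenter

section StrongDual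

theorem denseRange_toDualMap (𝕜 F : Type*) [RCLike 𝕜] [NormedAddCommGroup F]
    [InnerProductSpace 𝕜 F] : DenseRange (InnerProductSpace.toDualMap 𝕜 F) := by
  let ι : F →L[𝕜] UniformSpace.Completion F := UniformSpace.Completion.toComplL
  have ι_dense : DenseRange ι := UniformSpace.Completion.denseRange_coe
  have ι_inducing : IsUniformInducing ι := UniformSpace.Completion.isUniformInducing_coe F
  let Φ : UniformSpace.Completion F → StrongDual 𝕜 F := fun y =>
    (InnerProductSpace.toDual 𝕜 _ y).comp ι
  have Φ_continuous : Continuous Φ := by fun_prop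
  have Φ_surjective : Function.Surjective Φ := fun f =>
    ⟨(InnerProductSpace.toDual 𝕜 _).symm (f.extend ι), by
      ext x
      simp [Φ, f.extend_eq ι_dense ι_inducing]⟩
  have Φ_coe : Φ ∘ ι = InnerProductSpace.toDualMap 𝕜 F := by
    ext x y
    exact UniformSpace.Completion.inner_coe x y
  rw [← Φ_coe]
  exact Φ_surjective.denseRange.comp ι_dense Φ_continuous

variable {F : Type*} [NormedAddCommGroup F] [NormedSpace ℝ F] [MeasurableSpace F]
  [OpensMeasurableSpace F] {ν : Measure F}

theorem integrable_strongDual (hν : Integrable (fun x => ‖x‖) ν) (f : StrongDual ℝ F) :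
    Integrable f ν :=
  (hν.const_mul ‖f‖).mono' f.continuous.measurable.aestronglyMeasurable
    (.of_forall f.le_opNorm)

theorem continuous_integral_strongDual (hν : Integrable (fun x => ‖x‖) ν) :
    Continuous fun f : StrongDual ℝ F => ∫ x, f x ∂ν := by
  let I : StrongDual ℝ F →+ ℝ := AddMonoidHom.mk' (fun f => ∫ x, f x ∂ν) fun f g =>
    integral_add (integrable_strongDual hν f) (integrable_strongDual hν g)
  refine AddMonoidHomClass.continuous_of_bound I (∫ x, ‖x‖ ∂ν) fun f => ?_
  calc ‖∫ x, f x ∂ν‖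
      ≤ ∫ x, ‖f‖ * ‖x‖ ∂ν :=
        norm_integral_le_of_norm_le (hν.const_mul ‖f‖) (.of_forall f.le_opNorm)
    _ = (∫ x, ‖x‖ ∂ν) * ‖f‖ := by rw [integral_const_mul, mul_comm]

end StrongDual

theorem hasBarycenter_of_forall_inner [MeasurableSpace E] [OpensMeasurableSpace E]
    {ν : Measure E} {e : E} (hν : Integrable (fun x => ‖x‖) ν)
    (he : ∀ μ : E, ∫ x, ⟪μ, x⟫ ∂ν = ⟪μ, e⟫) : HasBarycenter ν e := fun f =>
  have eval_continuous : Continuous fun g : StrongDual ℝ E => g e := by fun_prop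
  ⟨integrable_strongDual hν f, congrFun ((denseRange_toDualMap ℝ E).equalizer
    (continuous_integral_strongDual hν) eval_continuous (funext he)) f⟩

section NonpositiveSignedMeasure

variable {X : Type*} [MeasurableSpace X] {m : SignedMeasure X}

theorem posPart_toJordanDecomposition_of_nonpos (hm : m ≤ 0) :
    m.toJordanDecomposition.posPart = 0 := by
  have hm_univ : m ≤[Set.univ] 0 := (VectorMeasure.le_restrict_univ_iff_le m 0).2 hm
  let j : JordanDecomposition X :=
    { posPart := 0
      negPart := m.toMeasureOfLEZero Set.univ .univ hm_univ
      mutuallySingular := .zero_left }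
  have hj : m = j.toSignedMeasure := by
    simp [j, JordanDecomposition.toSignedMeasure, SignedMeasure.toMeasureOfLEZero_toSignedMeasure]
  rw [SignedMeasure.toJordanDecomposition_eq hj]

theorem real_negPart_toJordanDecomposition_of_nonpos (hm : m ≤ 0) {A : Set X}
    (hA : MeasurableSet A) : m.toJordanDecomposition.negPart.real A = -m A := by
  simp [m.apply_eq_posPart_real_sub_negPart_real hA, posPart_toJordanDecomposition_of_nonpos hm]

end NonpositiveSignedMeasure

theorem stmt17_general [MeasurableSpace E] [OpensMeasurableSpace E]
    (K : Set E) (w : E) (m : SignedMeasure K) (hm : m ≤ 0)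
    (hK : Integrable (fun x : K => ‖(x : E)‖) m.toJordanDecomposition.negPart)
    (Em : E)
    (hEm : ∀ μ : E, ⟪μ, Em⟫ =
      (∫ x : K, ⟪μ, (x : E)⟫ ∂m.toJordanDecomposition.posPart) -
      (∫ x : K, ⟪μ, (x : E)⟫ ∂m.toJordanDecomposition.negPart)) :
    (1 : ℝ) ≤ 1 - m Set.univ ∧ (0 : ℝ) < 1 - m Set.univ ∧
    (1 - m Set.univ)⁻¹ • (w - Em) ∈ closure (convexHull ℝ ({w} ∪ K)) := by
  have m_univ : m Set.univ ≤ 0 := hm _ .univ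
  refine ⟨by linarith, by linarith, ?_⟩
  let ν : Measure E := m.toJordanDecomposition.negPart.map (↑)
  have coe_aemeasurable : AEMeasurable ((↑) : K → E) m.toJordanDecomposition.negPart :=
    measurable_subtype_coe.aemeasurable
  have ν_moment : Integrable (fun x => ‖x‖) ν :=
    (integrable_map_measure continuous_norm.measurable.aestronglyMeasurable coe_aemeasurable).2 hK
  have ν_barycenter : HasBarycenter ν (-Em) := hasBarycenter_of_forall_inner ν_moment fun μ => by
    have inner_measurable : Measurable fun x : E => ⟪μ, x⟫ := (innerSL ℝ μ).continuous.measurable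
    rw [integral_map coe_aemeasurable inner_measurable.aestronglyMeasurable, inner_neg_right,
      hEm μ, posPart_toJordanDecomposition_of_nonpos hm, integral_zero_measure, zero_sub, neg_neg]
  have ν_mass : ν.real Set.univ = -m Set.univ := by
    rw [map_measureReal_apply measurable_subtype_coe .univ, Set.preimage_univ,
      real_negPart_toJordanDecomposition_of_nonpos hm .univ]
  have ν_carried : ∀ᵐ x ∂ν, x ∈ closure K :=
    (ae_map_iff coe_aemeasurable isClosed_closure.measurableSet).2
      (.of_forall fun x => subset_closure x.2)
  simpa only [ν_mass, ← sub_eq_add_neg] using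
    ν_barycenter.inv_one_add_measureReal_smul_add_mem_closure_convexHull w ν_carried

/-- If `K` is compact, `m` is a finite signed Borel measure on `K` with `-m` nonnegative,
and `𝔈m` is the barycenter of `m`, then `1 - m(K) ≥ 1 > 0` and
`(w - 𝔈m)/(1 - m(K))` belongs to the closed convex hull of `{w} ∪ K`. -/
theorem stmt17 [CompleteSpace E] [MeasurableSpace E] [BorelSpace E]
    (K : Set E) (hK : IsCompact K) (w : E)
    (m : SignedMeasure K) (hm : ∀ A : Set K, m A ≤ 0)
    (Em : E)
    (hEm : ∀ μ : E, ⟪μ, Em⟫ =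
      (∫ x : K, ⟪μ, (x : E)⟫ ∂m.toJordanDecomposition.posPart) -
      (∫ x : K, ⟪μ, (x : E)⟫ ∂m.toJordanDecomposition.negPart)) :
    (1 : ℝ) ≤ 1 - m Set.univ ∧ (0 : ℝ) < 1 - m Set.univ ∧
    (1 - m Set.univ)⁻¹ • (w - Em) ∈ closure (convexHull ℝ ({w} ∪ K)) := by
  have : CompactSpace K := isCompact_iff_compactSpace.mp hK
  exact stmt17_general K w m (fun A _ => hm A)
    (continuous_subtype_val.norm.integrable_of_hasCompactSupport (.of_compactSpace _)) Em hEm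
end
end
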